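/- arXiv:math/0409586 — 2 statements merged into one kernel-verified Lean document; each statement's English description precedes it below -/
import Mathlib

section
/- Common image claim for three disks glued along an arc: Let A ⊆ S¹ be a closed arc with nonempty interior, and let q be a point in the interior of A. Let F₁, F₂, F₃ : D² → S² be continuous maps which all agree on A (F₁|_A = F₂|_A = F₃|_A), and suppose that for each i ∈ {1,2,3}, every point a in the interior of A is an injective point of the restriction Gᵢ := Fᵢ|_{S¹} (i.e. Gᵢ⁻¹({Gᵢ(a)}) = {a}). Set p := F₁(q). Then there exist indices i ≠ j in {1,2,3} and a connected open set W ⊆ S² such that p lies in the closure of W and W ⊆ Fᵢ(D²) ∩ F_j(D²). -/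
open Metric Set

noncomputable section

/-- The unit circle in the Euclidean plane. -/
def circleS : Set (EuclideanSpace ℝ (Fin 2)) := Metric.sphere 0 1

/-- The closed unit disk in the Euclidean plane. -/
def diskS : Set (EuclideanSpace ℝ (Fin 2)) := Metric.closedBall 0 1

/-- The unit sphere in Euclidean 3-space. -/
def sphereS : Set (EuclideanSpace ℝ (Fin 3)) := Metric.sphere 0 1

/-- `A` is a closed arc in the circle: the image of a topological embedding of a (nondegenerate)
closed interval.  (A continuous injection of a compact interval into the Hausdorff space `ℝ²`
is automatically an embedding onto its image.) -/
def IsClosedArc (A : Set (EuclideanSpace ℝ (Fin 2))) : Prop :=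
  A ⊆ circleS ∧ ∃ (a b : ℝ) (φ : ℝ → EuclideanSpace ℝ (Fin 2)), a < b ∧
    ContinuousOn φ (Icc a b) ∧ InjOn φ (Icc a b) ∧ φ '' Icc a b = A

/-- The interior of `A` relative to the circle. -/
def circleInterior (A : Set (EuclideanSpace ℝ (Fin 2))) : Set (EuclideanSpace ℝ (Fin 2)) :=
  {x | x ∈ A ∧ ∃ V, IsOpen V ∧ x ∈ V ∧ V ∩ circleS ⊆ A}

/-!
Both the separation of the plane by an arc and the filling of its sides by the disks are detected
by continuous logarithms of `(z - x) / (z - y)`: there is none on the frontier of a bounded set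
which contains `x` and whose closure omits `y`.

View the sphere as `ℂ ∪ {∞}` with `p = 0`, let `γ` be a short piece of the common boundary arc
through `p`, and let `K` be the union of the images of the remaining boundary arcs together with a
neighbourhood of `∞`. A small disk around `p` misses `K`, and the winding of `z - x` along `γ`,
closed up outside that disk, takes different values at some `x` and `y` in the disk, since
otherwise it would yield a logarithm of `(z - γ b) / (z - γ a)` on a frontier separating the end
points of `γ`. If some `Fᵢ` missed a value in the component of `x` and one in the component of `y`
of the complement of `K ∪ γ`, then, the disk being contractible, `(z - x) / (z - y)` would have a
logarithm along the boundary loop of `Fᵢ`, which forces the two windings to agree. Hence every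
`Fᵢ` covers one of the two components, and two of the three cover the same one. Each of them
accumulates at `p`: otherwise its frontier would lie in `K` and two disjoint subarcs of `γ`, where
`(z - x) / (z - y)` has a logarithm, but its frontier separates `x` from `y`.
-/

open Filter Topology Complex
open scoped OnePoint

section Logarithms

/-- `h` has a continuous logarithm on the set `s`. -/
def HasLogOn {X : Type*} [TopologicalSpace X] (h : X → ℂ) (s : Set X) : Prop :=
  ∃ g : X → ℂ, ContinuousOn g s ∧ ∀ x ∈ s, exp (g x) = h x

variable {X Y : Type*} [TopologicalSpace X] [TopologicalSpace Y] {h k : X → ℂ} {s t : Set X}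

theorem HasLogOn.mono (ht : HasLogOn h t) (hst : s ⊆ t) : HasLogOn h s :=
  let ⟨g, hg, hexp⟩ := ht
  ⟨g, hg.mono hst, fun x hx => hexp x (hst hx)⟩

theorem HasLogOn.congr (hs : HasLogOn h s) (hk : EqOn k h s) : HasLogOn k s :=
  let ⟨g, hg, hexp⟩ := hs
  ⟨g, hg, fun x hx => (hexp x hx).trans (hk hx).symm⟩

theorem HasLogOn.mul (hh : HasLogOn h s) (hk : HasLogOn k s) :
    HasLogOn (fun x => h x * k x) s :=
  let ⟨g, hg, hgexp⟩ := hh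
  let ⟨l, hl, hlexp⟩ := hk
  ⟨fun x => g x + l x, hg.add hl, fun x hx => by rw [exp_add, hgexp x hx, hlexp x hx]⟩

theorem HasLogOn.comp {f : Y → X} {u : Set Y} (hs : HasLogOn h s) (hf : ContinuousOn f u)
    (hmaps : MapsTo f u s) : HasLogOn (fun y => h (f y)) u :=
  let ⟨g, hg, hexp⟩ := hs
  ⟨g ∘ f, hg.comp hf hmaps, fun y hy => hexp (f y) (hmaps hy)⟩

theorem hasLogOn_of_forall_mem_slitPlane (hc : ContinuousOn h s)
    (hs : ∀ x ∈ s, h x ∈ slitPlane) : HasLogOn h s :=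
  ⟨fun x => log (h x), hc.clog hs, fun x hx => exp_log (slitPlane_ne_zero (hs x hx))⟩

theorem hasLogOn_of_restrict {g : s → ℂ} (hg : Continuous g) (hexp : ∀ x : s, exp (g x) = h x) :
    HasLogOn h s := by
  have hext (x : s) : Function.extend Subtype.val g 0 x = g x :=
    Subtype.val_injective.extend_apply g 0 x
  refine ⟨Function.extend Subtype.val g 0, ?_, fun x hx => ?_⟩
  · exact continuousOn_iff_continuous_domRestrict.2 (hg.congr fun x => (hext x).symm)
  · exact (congrArg exp (hext ⟨x, hx⟩)).trans (hexp ⟨x, hx⟩)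

theorem exists_continuous_log [ContractibleSpace X] (hc : Continuous h) (h0 : ∀ x, h x ≠ 0) :
    ∃ g : X → ℂ, Continuous g ∧ ∀ x, exp (g x) = h x := by
  obtain ⟨y, ⟨H⟩⟩ := id_nullhomotopic X
  let hne : C(X, {z : ℂ // z ≠ 0}) := ⟨fun x => ⟨h x, h0 x⟩, hc.subtype_mk h0⟩
  let K : C(unitInterval × X, {z : ℂ // z ≠ 0}) := hne.comp H.symm.toContinuousMap
  have hK (x : X) : K (0, x) = ⟨exp (log (h y)), exp_ne_zero _⟩ :=
    Subtype.ext (by simp [K, hne, exp_log (h0 y)])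
  let L := isCoveringMap_exp.liftHomotopy K (.const X (log (h y))) hK
  refine ⟨fun x => L (1, x), by fun_prop, fun x => ?_⟩
  have hL := congrFun (isCoveringMap_exp.liftHomotopy_lifts K (.const X (log (h y))) hK) (1, x)
  simpa [K, hne] using congrArg Subtype.val hL

theorem hasLogOn_Icc {p : ℝ → ℂ} {a b : ℝ} (hp : ContinuousOn p (Icc a b))
    (h0 : ∀ t ∈ Icc a b, p t ≠ 0) : HasLogOn p (Icc a b) := by
  rcases (Icc a b).eq_empty_or_nonempty with hemp | hne
  · exact ⟨p, hp, by simp [hemp]⟩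
  have := (convex_Icc a b).contractibleSpace hne
  obtain ⟨g, hg, hexp⟩ := exists_continuous_log (X := Icc a b) hp.domRestrict fun t => h0 t t.2
  exact hasLogOn_of_restrict hg hexp

theorem eqOn_of_exp_eqOn {g l : X → ℂ} (hs : IsPreconnected s) (hg : ContinuousOn g s)
    (hl : ContinuousOn l s) (hexp : ∀ x ∈ s, exp (g x) = exp (l x)) {x : X} (hx : x ∈ s)
    (hgl : g x = l x) : EqOn g l s :=
  isCoveringMap_exp.isSeparatedMap.eqOn_of_comp_eqOn
    isCoveringMap_exp.isLocalHomeomorph.isLocallyInjective hs hg hl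
    (fun y hy => Subtype.ext (hexp y hy)) hx hgl

theorem sub_eq_sub_of_exp_eqOn {g l : X → ℂ} (hs : IsPreconnected s) (hg : ContinuousOn g s)
    (hl : ContinuousOn l s) (hexp : ∀ x ∈ s, exp (g x) = exp (l x)) {x y : X} (hx : x ∈ s)
    (hy : y ∈ s) : g y - g x = l y - l x := by
  have hshift := eqOn_of_exp_eqOn (l := fun z => l z + (g x - l x)) hs hg (by fun_prop)
    (fun z hz => by rw [exp_add, exp_sub, hexp z hz, hexp x hx, div_self (exp_ne_zero _), mul_one])
    hx (by ring) hy
  linear_combination hshift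

theorem HasLogOn.union_of_isPreconnected_inter (hs : HasLogOn h s) (ht : HasLogOn h t)
    (hsc : IsClosed s) (htc : IsClosed t) (hst : IsPreconnected (s ∩ t)) :
    HasLogOn h (s ∪ t) := by
  classical
  obtain ⟨g, hg, hgexp⟩ := hs
  obtain ⟨l, hl, hlexp⟩ := ht
  obtain ⟨l', hl', hlexp', hagree⟩ : ∃ l' : X → ℂ, ContinuousOn l' t ∧
      (∀ x ∈ t, exp (l' x) = h x) ∧ EqOn l' g (s ∩ t) := by
    rcases (s ∩ t).eq_empty_or_nonempty with hemp | ⟨x, hx⟩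
    · exact ⟨l, hl, hlexp, by simp [hemp]⟩
    have hshift : ∀ y ∈ t, exp (l y + (g x - l x)) = h y := fun y hy => by
      rw [exp_add, exp_sub, hgexp x hx.1, ← hlexp x hx.2, div_self (exp_ne_zero _), mul_one,
        hlexp y hy]
    have hl' : ContinuousOn (fun y => l y + (g x - l x)) t := by fun_prop
    exact ⟨_, hl', hshift, eqOn_of_exp_eqOn hst (hl'.mono inter_subset_right)
      (hg.mono inter_subset_left) (fun y hy => by rw [hshift y hy.2, hgexp y hy.1]) hx (by ring)⟩
  have hpg : EqOn (s.piecewise g l') g s := piecewise_eqOn s g l'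
  have hpl : EqOn (s.piecewise g l') l' t := fun x hx => by
    by_cases hxs : x ∈ s
    · rw [hpg hxs, hagree ⟨hxs, hx⟩]
    · exact piecewise_eq_of_notMem s g l' hxs
  refine ⟨s.piecewise g l', (hg.congr hpg).union_of_isClosed (hl'.congr hpl) hsc htc, ?_⟩
  rintro x (hx | hx)
  · rw [hpg hx, hgexp x hx]
  · rw [hpl hx, hlexp' x hx]

theorem HasLogOn.image_of_injOn [T2Space Y] {f : X → Y} {p : Y → ℂ}
    (hlog : HasLogOn (fun x => p (f x)) s) (hs : IsCompact s) (hf : ContinuousOn f s)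
    (hinj : InjOn f s) : HasLogOn p (f '' s) := by
  obtain ⟨g, hg, hexp⟩ := hlog
  have := isCompact_iff_compactSpace.1 hs
  have hcont : Continuous (Equiv.Set.imageOfInjOn f s hinj) := hf.domRestrict.subtype_mk _
  let e := hcont.homeoOfEquivCompactToT2
  have he (y : f '' s) : f (e.symm y) = y := congrArg Subtype.val (e.apply_symm_apply y)
  exact hasLogOn_of_restrict (g := fun y => g (e.symm y))
    (hg.domRestrict.comp e.symm.continuous)
    fun y => (hexp _ (e.symm y).2).trans (congrArg p (he y))

end Logarithms

section Degree

theorem not_forall_norm_lt_eq_sub {h : ℂ → ℂ} (hc : Continuous h) (h0 : ∀ z, h z ≠ 0) (x : ℂ)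
    (R : ℝ) : ¬ ∀ z, R < ‖z‖ → h z = z - x := by
  intro hR
  obtain ⟨g, hg, hexp⟩ := exists_continuous_log hc h0
  obtain ⟨r, hr⟩ := exists_gt (max 0 (R + ‖x‖))
  have hr0 : 0 < r := (le_max_left _ _).trans_lt hr
  have hcircle (t : ℝ) : h (x + r * exp (t * I)) = r * exp (t * I) := by
    rw [hR, add_sub_cancel_left]
    have hnorm : ‖(r : ℂ) * exp (t * I)‖ = r := by
      rw [norm_mul, norm_exp_ofReal_mul_I, mul_one, Complex.norm_of_nonneg hr0.le]
    have htri := norm_sub_norm_le ((r : ℂ) * exp (t * I)) (-x)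
    rw [sub_neg_eq_add, norm_neg, hnorm, add_comm _ x] at htri
    linarith [le_max_right 0 (R + ‖x‖)]
  have hlift := sub_eq_sub_of_exp_eqOn (x := (0 : ℝ)) (y := 2 * Real.pi)
    (g := fun t : ℝ => g (x + r * exp (t * I))) (l := fun t : ℝ => log r + t * I)
    isPreconnected_univ (by fun_prop) (by fun_prop)
    (fun t _ => by
      rw [hexp, hcircle, exp_add, exp_log (ofReal_ne_zero.2 hr0.ne')]) (mem_univ _) (mem_univ _)
  have hperiod : exp ((2 * Real.pi : ℝ) * I) = exp ((0 : ℝ) * I) := by simp [exp_two_pi_mul_I]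
  rw [hperiod] at hlift
  simp [Real.pi_ne_zero] at hlift

-- A logarithm on the frontier would extend `z - x` from `Vᶜ` to a nonvanishing function on `ℂ`.
theorem not_hasLogOn_frontier {V : Set ℂ} (hb : Bornology.IsBounded V) {x y : ℂ}
    (hx : x ∈ V) (hy : y ∉ closure V) :
    ¬ HasLogOn (fun z => (z - x) / (z - y)) (frontier V) := by
  classical
  rintro ⟨g, hg, hexp⟩
  obtain ⟨G, hG⟩ := ContinuousMap.exists_restrict_eq isClosed_frontier
    ⟨(frontier V).domRestrict g, hg.domRestrict⟩
  have hGg (z : ℂ) (hz : z ∈ frontier V) : G z = g z := DFunLike.congr_fun hG ⟨z, hz⟩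
  have hy_ne (z : ℂ) (hz : z ∈ closure V) : z - y ≠ 0 := sub_ne_zero.2 (ne_of_mem_of_not_mem hz hy)
  let h : ℂ → ℂ := V.piecewise (fun z => (z - y) * exp (G z)) (fun z => z - x)
  have hh : Continuous h := continuous_piecewise
    (fun z hz => by
      rw [hGg z hz, hexp z hz, mul_div_cancel₀ _ (hy_ne z (frontier_subset_closure hz))])
    (by fun_prop) (by fun_prop)
  have hh0 (z : ℂ) : h z ≠ 0 := by
    by_cases hz : z ∈ V
    · simpa only [h, piecewise_eq_of_mem V _ _ hz] using
        mul_ne_zero (hy_ne z (subset_closure hz)) (exp_ne_zero _)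
    · simpa only [h, piecewise_eq_of_notMem V _ _ hz] using
        sub_ne_zero.2 (ne_of_mem_of_not_mem hx hz).symm
  obtain ⟨R, hR⟩ := hb.exists_norm_le
  exact not_forall_norm_lt_eq_sub hh hh0 x R fun z hz =>
    piecewise_eq_of_notMem V _ _ fun hzV => (hR z hzV).not_gt hz

end Degree

section Moebius

/-- The function `1 / (z - y)` on the Riemann sphere, with value `0` at infinity. -/
def invSub (y : ℂ) (z : OnePoint ℂ) : ℂ := z.elim 0 fun w => (w - y)⁻¹

/-- The Möbius function `(z - x) / (z - y)` on the Riemann sphere, with value `1` at infinity.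
It is continuous away from its pole `y`; at the pole it takes the junk value `1`. -/
def moebius (x y : ℂ) (z : OnePoint ℂ) : ℂ := 1 + (y - x) * invSub y z

theorem continuousOn_invSub (y : ℂ) : ContinuousOn (invSub y) {(y : OnePoint ℂ)}ᶜ := by
  refine continuousOn_of_forall_continuousAt fun z hz => ?_
  induction z using OnePoint.rec with
  | infty =>
    rw [OnePoint.continuousAt_infty', coclosedCompact_eq_cocompact, ← cobounded_eq_cocompact]
    change Tendsto (fun z : ℂ => (z - y)⁻¹) (Bornology.cobounded ℂ) (𝓝 0)
    exact tendsto_inv₀_cobounded.comp (by simp [sub_eq_add_neg])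
  | coe w =>
    rw [OnePoint.continuousAt_coe]
    have hw : w - y ≠ 0 := sub_ne_zero.2 fun h => hz (congrArg _ h)
    change ContinuousAt (fun z : ℂ => (z - y)⁻¹) w
    fun_prop (disch := assumption)

theorem continuousOn_moebius (x y : ℂ) : ContinuousOn (moebius x y) {(y : OnePoint ℂ)}ᶜ :=
  continuousOn_const.add (continuousOn_const.mul (continuousOn_invSub y))

theorem moebius_infty (x y : ℂ) : moebius x y ∞ = 1 := by simp [moebius, invSub]

variable {x y w : ℂ} {z : OnePoint ℂ}

theorem moebius_coe {z : ℂ} (hz : z ≠ y) : moebius x y z = (z - x) / (z - y) := by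
  have hzy : z - y ≠ 0 := sub_ne_zero.2 hz
  simp only [moebius, invSub, OnePoint.elim_some]
  field_simp
  ring

theorem moebius_ne_zero (hx : z ≠ x) (hy : z ≠ y) : moebius x y z ≠ 0 := by
  induction z using OnePoint.rec with
  | infty => simp [moebius_infty]
  | coe z =>
    rw [moebius_coe (mt (congrArg _) hy)]
    exact div_ne_zero (sub_ne_zero.2 (mt (congrArg _) hx)) (sub_ne_zero.2 (mt (congrArg _) hy))

theorem moebius_mul_moebius (hy : z ≠ y) (hw : z ≠ w) :
    moebius x y z * moebius y w z = moebius x w z := by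
  induction z using OnePoint.rec with
  | infty => simp [moebius_infty]
  | coe z =>
    have hzw : z ≠ w := mt (congrArg _) hw
    have hzy : z ≠ y := mt (congrArg _) hy
    rw [moebius_coe hzy, moebius_coe hzw, moebius_coe hzw, div_mul_div_cancel₀ (sub_ne_zero.2 hzy)]

theorem moebius_mem_slitPlane (hz : ∀ w ∈ closedBall y (dist x y), z ≠ w) :
    moebius x y z ∈ slitPlane := by
  refine mem_slitPlane_of_norm_lt_one ?_
  induction z using OnePoint.rec with
  | infty => simp [invSub]
  | coe z =>
    have hlt : dist x y < ‖z - y‖ := by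
      rw [← dist_eq]
      exact not_le.1 fun h => hz z h rfl
    have hpos : 0 < ‖z - y‖ := dist_nonneg.trans_lt hlt
    rwa [invSub, OnePoint.elim_some, norm_mul, norm_inv, ← div_eq_mul_inv, div_lt_one hpos,
      norm_sub_rev, ← dist_eq]

theorem hasLogOn_moebius_comp_of_disjoint {X : Type*} [TopologicalSpace X] {s : Set X}
    {f : X → OnePoint ℂ} (hf : ContinuousOn f s)
    (hs : ∀ u ∈ s, ∀ w ∈ closedBall y (dist x y), f u ≠ w) :
    HasLogOn (fun u => moebius x y (f u)) s :=
  hasLogOn_of_forall_mem_slitPlane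
    ((continuousOn_moebius x y).comp hf fun u hu =>
      hs u hu y (mem_closedBall_self dist_nonneg))
    fun u hu => moebius_mem_slitPlane (hs u hu)

theorem HasLogOn.moebius_trans {X : Type*} [TopologicalSpace X] {s : Set X} {f : X → OnePoint ℂ}
    (hxy : HasLogOn (fun u => moebius x y (f u)) s) (hyw : HasLogOn (fun u => moebius y w (f u)) s)
    (hy : ∀ u ∈ s, f u ≠ y) (hw : ∀ u ∈ s, f u ≠ w) : HasLogOn (fun u => moebius x w (f u)) s :=
  (hxy.mul hyw).congr fun u hu => (moebius_mul_moebius (hy u hu) (hw u hu)).symm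

theorem hasLogOn_moebius_of_isPreconnected {s : Set (OnePoint ℂ)} (hs : IsClosed s) {U : Set ℂ}
    (hU : IsPreconnected U) (hUs : ∀ u ∈ U, (u : OnePoint ℂ) ∉ s) (hx : x ∈ U) (hy : y ∈ U) :
    HasLogOn (moebius x y) s := by
  refine hU.induction₂' (fun x y => HasLogOn (moebius x y) s) (fun u hu => ?_)
    (fun u v w _ hv hw huv hvw => huv.moebius_trans (f := id) hvw
      (fun z hz h => hUs v hv (h ▸ hz)) (fun z hz h => hUs w hw (h ▸ hz))) hx hy
  obtain ⟨ε, hε, hball⟩ := isOpen_iff.1 (hs.preimage OnePoint.continuous_coe).isOpen_compl u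
    (hUs u hu)
  refine mem_nhdsWithin_of_mem_nhds (mem_of_superset (ball_mem_nhds u (half_pos hε)) ?_)
  have hlog {a b : ℂ} (ha : dist b u + dist a b < ε) : HasLogOn (moebius a b) s := by
    refine hasLogOn_moebius_comp_of_disjoint (f := id) continuousOn_id ?_
    rintro _ hz v hv rfl
    exact hball (closedBall_subset_ball' (add_comm (dist b u) _ ▸ ha) hv) hz
  intro v hv
  rw [mem_ball] at hv
  exact ⟨hlog (by rw [dist_comm u]; linarith), hlog (by rw [dist_self]; linarith)⟩

end Moebius

section SideIndex

/-- The increment `g b - g a` of a continuous logarithm `g` of `h` along the interval `[a, b]`,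
with junk value `0` if there is none. -/
def logIncrement (h : ℝ → ℂ) (a b : ℝ) : ℂ :=
  open Classical in if hlog : HasLogOn h (Icc a b) then hlog.choose b - hlog.choose a else 0

/-- For an arc `γ` with end points outside a disk around `0`, the increment of `log (z - x)` along
`γ` followed by its increment along any path from `γ b` back to `γ a` outside that disk, the latter
measured relative to `log z`. As `x` moves in the disk, it only changes when `x` crosses `γ`. -/
def sideIndex (γ : ℝ → ℂ) (a b : ℝ) (x : ℂ) : ℂ :=
  logIncrement (fun t => γ t - x) a b - (log (moebius x 0 (γ b)) - log (moebius x 0 (γ a)))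

section LogIncrement

variable {h k M : ℝ → ℂ} {a b : ℝ}

theorem logIncrement_eq_sub {g : ℝ → ℂ} (hab : a ≤ b) (hg : ContinuousOn g (Icc a b))
    (hexp : ∀ t ∈ Icc a b, exp (g t) = h t) : logIncrement h a b = g b - g a := by
  have hlog : HasLogOn h (Icc a b) := ⟨g, hg, hexp⟩
  obtain ⟨hl, hlexp⟩ := hlog.choose_spec
  rw [logIncrement, dif_pos hlog]
  exact sub_eq_sub_of_exp_eqOn isPreconnected_Icc hl hg
    (fun t ht => (hlexp t ht).trans (hexp t ht).symm) (left_mem_Icc.2 hab) (right_mem_Icc.2 hab)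

theorem exp_logIncrement (hab : a ≤ b) (hh : HasLogOn h (Icc a b)) :
    exp (logIncrement h a b) = h b / h a := by
  obtain ⟨g, hg, hexp⟩ := hh
  rw [logIncrement_eq_sub hab hg hexp, exp_sub, hexp b (right_mem_Icc.2 hab),
    hexp a (left_mem_Icc.2 hab)]

theorem logIncrement_mul_exp (hab : a ≤ b) (hh : HasLogOn h (Icc a b))
    (hM : ContinuousOn M (Icc a b)) (hk : ∀ t ∈ Icc a b, k t = h t * exp (M t)) :
    logIncrement k a b = logIncrement h a b + (M b - M a) := by
  obtain ⟨g, hg, hexp⟩ := hh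
  rw [logIncrement_eq_sub hab hg hexp, logIncrement_eq_sub (g := fun t => g t + M t) hab
    (hg.add hM) fun t ht => by rw [exp_add, hexp t ht, hk t ht]]
  ring

end LogIncrement

variable {γ : ℝ → ℂ} {a b : ℝ} {x y : ℂ} {δ : ℝ}

theorem hasLogOn_sub (hγ : ContinuousOn γ (Icc a b)) (hx : x ∉ γ '' Icc a b) :
    HasLogOn (fun t => γ t - x) (Icc a b) :=
  hasLogOn_Icc (by fun_prop) fun t ht => sub_ne_zero.2 fun h => hx ⟨t, ht, h⟩

theorem logIncrement_sub_eq_add (hab : a ≤ b) (hγ : ContinuousOn γ (Icc a b))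
    (hx : ∀ t ∈ Icc a b, γ t ∉ closedBall y (dist x y)) :
    logIncrement (fun t => γ t - x) a b = logIncrement (fun t => γ t - y) a b +
      (log (moebius x y (γ b)) - log (moebius x y (γ a))) := by
  have hne (t : ℝ) (ht : t ∈ Icc a b) : γ t ≠ y :=
    (ne_of_mem_of_not_mem (mem_closedBall_self dist_nonneg) (hx t ht)).symm
  have hslit (t : ℝ) (ht : t ∈ Icc a b) : moebius x y (γ t) ∈ slitPlane :=
    moebius_mem_slitPlane fun w hw h => hx t ht (OnePoint.coe_injective h ▸ hw)
  have hcont : ContinuousOn (fun t => moebius x y (γ t)) (Icc a b) :=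
    (continuousOn_moebius x y).comp (OnePoint.continuous_coe.comp_continuousOn hγ)
      fun t ht h => hne t ht (OnePoint.coe_injective h)
  refine logIncrement_mul_exp hab (hasLogOn_sub hγ ?_) (hcont.clog hslit) fun t ht => ?_
  · rintro ⟨t, ht, h⟩
    exact hne t ht h
  · rw [exp_log (slitPlane_ne_zero (hslit t ht)), moebius_coe (hne t ht),
      mul_div_cancel₀ _ (sub_ne_zero.2 (hne t ht))]

theorem continuousOn_logIncrement_sub (hab : a ≤ b) (hγ : ContinuousOn γ (Icc a b)) :
    ContinuousOn (fun x => logIncrement (fun t => γ t - x) a b) (γ '' Icc a b)ᶜ := by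
  refine continuousOn_of_forall_continuousAt fun y hy => ?_
  obtain ⟨ε, hε, hball⟩ :=
    isOpen_iff.1 (isCompact_Icc.image_of_continuousOn hγ).isClosed.isOpen_compl y hy
  have hlocal : (fun x => logIncrement (fun t => γ t - y) a b +
      (log (moebius x y (γ b)) - log (moebius x y (γ a)))) =ᶠ[𝓝 y]
      fun x => logIncrement (fun t => γ t - x) a b := by
    filter_upwards [ball_mem_nhds y hε] with x hx
    exact (logIncrement_sub_eq_add hab hγ fun t ht h =>
      hball (closedBall_subset_ball hx h) ⟨t, ht, rfl⟩).symm
  have hlog (z : OnePoint ℂ) : ContinuousAt (fun x => log (moebius x y z)) y :=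
    ContinuousAt.clog (by unfold moebius; fun_prop) (by simp [moebius])
  exact ((hlog _).sub (hlog _)).const_add _ |>.congr hlocal

theorem continuousOn_log_moebius_zero {z : ℂ} (hz : δ ≤ ‖z‖) :
    ContinuousOn (fun x => log (moebius x 0 z)) (ball 0 δ) := by
  refine ContinuousOn.clog (by unfold moebius; fun_prop) fun x hx => moebius_mem_slitPlane ?_
  rintro w hw h
  obtain rfl := OnePoint.coe_injective h
  exact ((mem_closedBall.1 hw).trans_lt (mem_ball.1 hx)).not_ge (by simpa using hz)

theorem exp_log_moebius_zero {z : ℂ} (hz : δ ≤ ‖z‖) (hx : x ∈ ball 0 δ) :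
    exp (log (moebius x 0 z)) = (z - x) / z := by
  rw [mem_ball_zero_iff] at hx
  have hz0 : z ≠ 0 := norm_pos_iff.1 ((norm_nonneg x).trans_lt (hx.trans_le hz))
  have hzx : z ≠ x := by
    rintro rfl
    exact hx.not_ge hz
  rw [moebius_coe hz0, sub_zero, exp_log (div_ne_zero (sub_ne_zero.2 hzx) hz0)]

theorem exp_sideIndex (hab : a ≤ b) (hγ : ContinuousOn γ (Icc a b)) (ha : δ ≤ ‖γ a‖)
    (hb : δ ≤ ‖γ b‖) (hx : x ∈ ball 0 δ \ γ '' Icc a b) :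
    exp (sideIndex γ a b x) = γ b / γ a := by
  have hγx (t : ℝ) (ht : t ∈ Icc a b) : γ t - x ≠ 0 := sub_ne_zero.2 fun h => hx.2 ⟨t, ht, h⟩
  have := hγx a (left_mem_Icc.2 hab)
  have := hγx b (right_mem_Icc.2 hab)
  rw [sideIndex, exp_sub, exp_sub, exp_logIncrement hab (hasLogOn_sub hγ hx.2),
    exp_log_moebius_zero ha hx.1, exp_log_moebius_zero hb hx.1]
  field_simp

theorem hasLogOn_div_of_forall_sideIndex_eq (hab : a ≤ b) (hγ : ContinuousOn γ (Icc a b))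
    (ha : δ ≤ ‖γ a‖) (hb : δ ≤ ‖γ b‖) {c : ℂ} (hc : exp c = γ b / γ a)
    (hside : ∀ x ∈ ball 0 δ \ γ '' Icc a b, sideIndex γ a b x = c) :
    HasLogOn (fun z => (z - γ b) / (z - γ a)) (ball 0 δ ∪ (γ '' Icc a b)ᶜ) := by
  classical
  let near : ℂ → ℂ := fun z => c + (log (moebius z 0 (γ b)) - log (moebius z 0 (γ a)))
  let far : ℂ → ℂ := fun z => logIncrement (fun t => γ t - z) a b
  have hnear : EqOn ((ball 0 δ).piecewise near far) near (ball 0 δ) := piecewise_eqOn _ _ _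
  have hfar : EqOn ((ball 0 δ).piecewise near far) far (γ '' Icc a b)ᶜ := fun z hz => by
    by_cases hzδ : z ∈ ball 0 δ
    · rw [hnear hzδ]
      simp only [near, far, ← hside z ⟨hzδ, hz⟩, sideIndex, sub_add_cancel]
    · exact piecewise_eq_of_notMem _ _ _ hzδ
  refine ⟨(ball 0 δ).piecewise near far, ?_, ?_⟩
  · exact ((continuousOn_const.add ((continuousOn_log_moebius_zero hb).sub
      (continuousOn_log_moebius_zero ha))).congr hnear).union_of_isOpen
      ((continuousOn_logIncrement_sub hab hγ).congr hfar) isOpen_ball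
      (isCompact_Icc.image_of_continuousOn hγ).isClosed.isOpen_compl
  · rintro z (hz | hz)
    · have hz' : ‖z‖ < δ := mem_ball_zero_iff.1 hz
      have ha0 : γ a ≠ 0 := norm_pos_iff.1 ((norm_nonneg z).trans_lt (hz'.trans_le ha))
      have hb0 : γ b ≠ 0 := norm_pos_iff.1 ((norm_nonneg z).trans_lt (hz'.trans_le hb))
      rw [hnear hz, exp_add, exp_sub, hc, exp_log_moebius_zero ha hz, exp_log_moebius_zero hb hz,
        div_div_div_comm, mul_div_cancel₀ _ (div_ne_zero hb0 ha0), ← neg_div_neg_eq,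
        neg_sub, neg_sub]
    · rw [hfar hz, exp_logIncrement hab (hasLogOn_sub hγ hz), ← neg_div_neg_eq, neg_sub, neg_sub]

theorem exists_isBounded_frontier_subset {m : ℝ} (hm : m ∈ Icc a b)
    (hγ : ContinuousOn γ (Icc a b)) (hinj : InjOn γ (Icc a b)) {U : Set ℂ} (hU : IsOpen U)
    (hmU : γ m ∈ U) (ha : γ a ∉ U) (hb : γ b ∉ U) :
    ∃ V, Bornology.IsBounded V ∧ γ b ∈ V ∧ γ a ∉ closure V ∧
      frontier V ⊆ U ∪ (γ '' Icc a b)ᶜ := by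
  have hcompact {s t : ℝ} (hst : Icc s t ⊆ Icc a b) : IsCompact (γ '' Icc s t \ U) :=
    (isCompact_Icc.image_of_continuousOn (hγ.mono hst)).diff hU
  have hfirst : Icc a m ⊆ Icc a b := Icc_subset_Icc_right hm.2
  have hsecond : Icc m b ⊆ Icc a b := Icc_subset_Icc_left hm.1
  have hdisj : γ '' Icc m b \ U ⊆ (γ '' Icc a m \ U)ᶜ := by
    rintro _ ⟨⟨t, ht, rfl⟩, htU⟩ ⟨⟨s, hs, hst⟩, -⟩
    obtain rfl : s = t := hinj (hfirst hs) (hsecond ht) hst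
    obtain rfl : s = m := le_antisymm hs.2 ht.1
    exact htU hmU
  obtain ⟨V, hV, hsV, hVs, hVc⟩ := exists_open_between_and_isCompact_closure (hcompact hsecond)
    (hcompact hfirst).isClosed.isOpen_compl hdisj
  refine ⟨V, hVc.isBounded.subset subset_closure,
    hsV ⟨mem_image_of_mem γ (right_mem_Icc.2 hm.2), hb⟩,
    fun h => hVs h ⟨mem_image_of_mem γ (left_mem_Icc.2 hm.1), ha⟩, fun z hz => ?_⟩
  rw [hV.frontier_eq] at hz
  by_contra hzU
  rw [mem_union, not_or, notMem_compl_iff] at hzU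
  obtain ⟨hzU, t, ht, rfl⟩ := hzU
  rcases le_total t m with htm | htm
  · exact hVs hz.1 ⟨mem_image_of_mem γ ⟨ht.1, htm⟩, hzU⟩
  · exact hz.2 (hsV ⟨mem_image_of_mem γ ⟨htm, ht.2⟩, hzU⟩)

theorem exists_sideIndex_ne {m : ℝ} (hm : m ∈ Icc a b) (hγ : ContinuousOn γ (Icc a b))
    (hinj : InjOn γ (Icc a b)) (hγm : γ m ∈ ball 0 δ) (ha : δ ≤ ‖γ a‖) (hb : δ ≤ ‖γ b‖) :
    ∃ x ∈ ball 0 δ \ γ '' Icc a b, ∃ y ∈ ball 0 δ \ γ '' Icc a b,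
      sideIndex γ a b x ≠ sideIndex γ a b y := by
  by_contra! hconst
  have hab : a ≤ b := hm.1.trans hm.2
  have hδ : 0 < δ := (norm_nonneg _).trans_lt (mem_ball_zero_iff.1 hγm)
  obtain ⟨c, hc, hside⟩ : ∃ c, exp c = γ b / γ a ∧
      ∀ x ∈ ball 0 δ \ γ '' Icc a b, sideIndex γ a b x = c := by
    rcases (ball 0 δ \ γ '' Icc a b).eq_empty_or_nonempty with hemp | ⟨x, hx⟩
    · have hne : γ b / γ a ≠ 0 :=
        div_ne_zero (norm_pos_iff.1 (hδ.trans_le hb)) (norm_pos_iff.1 (hδ.trans_le ha))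
      exact ⟨_, exp_log hne, by simp [hemp]⟩
    · exact ⟨_, exp_sideIndex hab hγ ha hb hx, fun y hy => hconst y hy x hx⟩
  obtain ⟨V, hVb, hbV, haV, hfr⟩ := exists_isBounded_frontier_subset hm hγ hinj isOpen_ball hγm
    (by simpa using ha) (by simpa using hb)
  exact not_hasLogOn_frontier hVb hbV haV
    ((hasLogOn_div_of_forall_sideIndex_eq hab hγ ha hb hc hside).mono hfr)

theorem sideIndex_eq_of_hasLogOn {X : Type*} [TopologicalSpace X] {f : X → OnePoint ℂ}
    {c : ℝ → X} {e : ℝ} (hf : Continuous f) (hc : Continuous c) (hab : a ≤ b) (hbe : b ≤ e)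
    (hce : c e = c a) (hγ : ContinuousOn γ (Icc a b)) (hfc : ∀ t ∈ Icc a b, f (c t) = γ t)
    (hout : ∀ t ∈ Icc b e, ∀ w : ℂ, w ∈ ball 0 δ → f (c t) ≠ w)
    (hx : x ∈ ball 0 δ \ γ '' Icc a b) (hy : y ∈ ball 0 δ \ γ '' Icc a b)
    (hlog : HasLogOn (fun u => moebius x y (f u)) (c '' Icc a e)) :
    sideIndex γ a b x = sideIndex γ a b y := by
  obtain ⟨N, hN, hNexp⟩ := hlog
  have hM : ContinuousOn (fun t => N (c t)) (Icc a e) :=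
    hN.comp hc.continuousOn (mapsTo_image c _)
  have hMexp (t : ℝ) (ht : t ∈ Icc a e) : exp (N (c t)) = moebius x y (f (c t)) :=
    hNexp _ (mem_image_of_mem c ht)
  have hinner : logIncrement (fun t => γ t - x) a b =
      logIncrement (fun t => γ t - y) a b + (N (c b) - N (c a)) := by
    refine logIncrement_mul_exp hab (hasLogOn_sub hγ hy.2)
      (hM.mono (Icc_subset_Icc_right hbe)) fun t ht => ?_
    have hty : γ t ≠ y := fun h => hy.2 ⟨t, ht, h⟩
    rw [hMexp t ⟨ht.1, ht.2.trans hbe⟩, hfc t ht, moebius_coe hty,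
      mul_div_cancel₀ _ (sub_ne_zero.2 hty)]
  have hslit {w : ℂ} (hw : w ∈ ball 0 δ) (t : ℝ) (ht : t ∈ Icc b e) :
      moebius w 0 (f (c t)) ∈ slitPlane :=
    moebius_mem_slitPlane fun v hv => hout t ht v (closedBall_subset_ball hw hv)
  have h0 : (0 : ℂ) ∈ ball 0 δ :=
    mem_ball_self ((norm_nonneg x).trans_lt (mem_ball_zero_iff.1 hx.1))
  have hcont {w : ℂ} (hw : w ∈ ball 0 δ) :
      ContinuousOn (fun t => log (moebius w 0 (f (c t)))) (Icc b e) :=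
    ((continuousOn_moebius w 0).comp (hf.comp hc).continuousOn fun t ht => hout t ht 0 h0).clog
      (hslit hw)
  have houter := sub_eq_sub_of_exp_eqOn
    (l := fun t => log (moebius x 0 (f (c t))) - log (moebius y 0 (f (c t)))) isPreconnected_Icc
    (hM.mono (Icc_subset_Icc_left hab)) ((hcont hx.1).sub (hcont hy.1))
    (fun t ht => by
      rw [hMexp t ⟨hab.trans ht.1, ht.2⟩, exp_sub, exp_log (slitPlane_ne_zero (hslit hx.1 t ht)),
        exp_log (slitPlane_ne_zero (hslit hy.1 t ht)),
        eq_div_iff (slitPlane_ne_zero (hslit hy.1 t ht)),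
        moebius_mul_moebius (hout t ht y hy.1) (hout t ht 0 h0)])
    (left_mem_Icc.2 hbe) (right_mem_Icc.2 hbe)
  simp only [hce, hfc a (left_mem_Icc.2 hab), hfc b (right_mem_Icc.2 hab)] at houter
  rw [sideIndex, sideIndex, hinner]
  linear_combination -houter

end SideIndex

section Crosscut

theorem closure_connectedComponentIn_inter_subset {X : Type*} [TopologicalSpace X]
    [LocallyConnectedSpace X] {O : Set X} (hO : IsOpen O) (x : X) :
    closure (connectedComponentIn O x) ∩ O ⊆ connectedComponentIn O x := by
  rintro y ⟨hy, hyO⟩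
  obtain ⟨z, hzy, hzx⟩ := mem_closure_iff.1 hy _ hO.connectedComponentIn
    (mem_connectedComponentIn hyO)
  rw [connectedComponentIn_eq hzx, ← connectedComponentIn_eq hzy]
  exact mem_connectedComponentIn hyO

variable {K U : Set ℂ} {γ : ℝ → ℂ} {a b m : ℝ} {x y : ℂ}

theorem HasLogOn.union_image_Icc {h : ℂ → ℂ} (hlog : HasLogOn h K) (hK : IsClosed K)
    (hγ : ContinuousOn γ (Icc a b)) (hinj : InjOn γ (Icc a b))
    (hh : ContinuousOn h (γ '' Icc a b)) (hh0 : ∀ t ∈ Icc a b, h (γ t) ≠ 0)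
    (hmeet : (K ∩ γ '' Icc a b).Subsingleton) : HasLogOn h (K ∪ γ '' Icc a b) :=
  hlog.union_of_isPreconnected_inter
    ((hasLogOn_Icc (hh.comp hγ (mapsTo_image γ _)) hh0).image_of_injOn (f := γ) isCompact_Icc hγ
      hinj)
    hK (isCompact_Icc.image_of_continuousOn hγ).isClosed hmeet.isPreconnected

theorem HasLogOn.union_image_Icc_union_image_Icc {h : ℂ → ℂ} {s t : ℝ} (hlog : HasLogOn h K)
    (hK : IsClosed K) (hγ : ContinuousOn γ (Icc a b)) (hinj : InjOn γ (Icc a b))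
    (hγK : ∀ r ∈ Ioo a b, γ r ∉ K) (hh : ContinuousOn h (γ '' Icc a b))
    (hh0 : ∀ r ∈ Icc a b, h (γ r) ≠ 0) (has : a ≤ s) (hst : s < t) (htb : t ≤ b) :
    HasLogOn h (K ∪ γ '' Icc a s ∪ γ '' Icc t b) := by
  have hfirst : Icc a s ⊆ Icc a b := Icc_subset_Icc_right (hst.le.trans htb)
  have hlast : Icc t b ⊆ Icc a b := Icc_subset_Icc_left (has.trans hst.le)
  have hmeet_first : K ∩ γ '' Icc a s ⊆ {γ a} := by
    rintro _ ⟨hrK, r, hr, rfl⟩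
    rcases hr.1.eq_or_lt with rfl | har
    · rfl
    · exact absurd hrK (hγK r ⟨har, hr.2.trans_lt (hst.trans_le htb)⟩)
  have hmeet_last : (K ∪ γ '' Icc a s) ∩ γ '' Icc t b ⊆ {γ b} := by
    rintro _ ⟨hrK | ⟨r', hr', heq⟩, r, hr, rfl⟩
    · rcases hr.2.eq_or_lt with rfl | hrb
      · rfl
      · exact absurd hrK (hγK r ⟨(has.trans_lt hst).trans_le hr.1, hrb⟩)
    · obtain rfl := hinj (hfirst hr') (hlast hr) heq
      exact absurd (hr.1.trans hr'.2) hst.not_ge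
  exact (hlog.union_image_Icc hK (hγ.mono hfirst) (hinj.mono hfirst) (hh.mono (image_mono hfirst))
    (fun r hr => hh0 r (hfirst hr)) (subsingleton_singleton.anti hmeet_first)).union_image_Icc
    (hK.union (isCompact_Icc.image_of_continuousOn (hγ.mono hfirst)).isClosed)
    (hγ.mono hlast) (hinj.mono hlast) (hh.mono (image_mono hlast))
    (fun r hr => hh0 r (hlast hr)) (subsingleton_singleton.anti hmeet_last)

theorem mem_closure_of_frontier_subset (hK : IsClosed K)
    (hlog : HasLogOn (fun z => (z - x) / (z - y)) K) (hγ : ContinuousOn γ (Icc a b))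
    (hinj : InjOn γ (Icc a b)) (hγK : ∀ t ∈ Ioo a b, γ t ∉ K) (hx : x ∉ γ '' Icc a b)
    (hy : y ∉ γ '' Icc a b) (hU : Bornology.IsBounded U) (hfr : frontier U ⊆ K ∪ γ '' Icc a b)
    (hxU : x ∈ U) (hyU : y ∉ closure U) (hm : m ∈ Ioo a b) : γ m ∈ closure U := by
  by_contra hmU
  have hnhds : {t | γ t ∉ frontier U} ∩ Ioo a b ∈ 𝓝 m :=
    inter_mem ((hγ.continuousAt (Icc_mem_nhds hm.1 hm.2)).preimage_mem_nhds
      (isClosed_frontier.isOpen_compl.mem_nhds fun h => hmU (frontier_subset_closure h)))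
      (Ioo_mem_nhds hm.1 hm.2)
  obtain ⟨s, t, hmst, hst⟩ := mem_nhds_iff_exists_Ioo_subset.1 hnhds
  have hst' : s < t := hmst.1.trans hmst.2
  obtain ⟨has, htb⟩ := (Ioo_subset_Ioo_iff hst').1 (hst.trans inter_subset_right)
  have hcont : ContinuousOn (fun z => (z - x) / (z - y)) (γ '' Icc a b) :=
    ContinuousOn.div (by fun_prop) (by fun_prop)
      fun z hz => sub_ne_zero.2 (ne_of_mem_of_not_mem hz hy)
  have hne (r : ℝ) (hr : r ∈ Icc a b) : (γ r - x) / (γ r - y) ≠ 0 :=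
    div_ne_zero (sub_ne_zero.2 fun h => hx ⟨r, hr, h⟩) (sub_ne_zero.2 fun h => hy ⟨r, hr, h⟩)
  refine not_hasLogOn_frontier hU hxU hyU ((hlog.union_image_Icc_union_image_Icc hK hγ hinj hγK
    hcont hne has hst' htb).mono fun z hz => ?_)
  rcases hfr hz with hzK | ⟨r, hr, rfl⟩
  · exact Or.inl (Or.inl hzK)
  rcases le_or_gt r s with hrs | hsr
  · exact Or.inl (Or.inr ⟨r, ⟨hr.1, hrs⟩, rfl⟩)
  rcases le_or_gt t r with htr | hrt
  · exact Or.inr ⟨r, ⟨htr, hr.2⟩, rfl⟩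
  · exact absurd hz (hst ⟨hsr, hrt⟩).1

theorem mem_closure_connectedComponentIn_of_crosscut {V : Set ℂ} (hK : IsClosed K)
    (hKb : Bornology.IsBounded Kᶜ) (hVo : IsOpen V) (hV : IsPreconnected V) (hVK : Disjoint V K)
    (hγ : ContinuousOn γ (Icc a b)) (hinj : InjOn γ (Icc a b)) (hγK : ∀ t ∈ Ioo a b, γ t ∉ K)
    (hx : x ∈ V \ γ '' Icc a b) (hy : y ∈ V \ γ '' Icc a b)
    (hxy : y ∉ connectedComponentIn (K ∪ γ '' Icc a b)ᶜ x) (hm : m ∈ Ioo a b) :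
    γ m ∈ closure (connectedComponentIn (K ∪ γ '' Icc a b)ᶜ x) := by
  have hmem {z : ℂ} (hz : z ∈ V \ γ '' Icc a b) : z ∈ (K ∪ γ '' Icc a b)ᶜ :=
    not_or.2 ⟨disjoint_left.1 hVK hz.1, hz.2⟩
  have hopen : IsOpen (K ∪ γ '' Icc a b)ᶜ :=
    (hK.union (isCompact_Icc.image_of_continuousOn hγ).isClosed).isOpen_compl
  have hclosed : IsClosed (((↑) : ℂ → OnePoint ℂ) '' V)ᶜ :=
    (OnePoint.isOpenEmbedding_coe.isOpenMap V hVo).isClosed_compl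
  have hlog : HasLogOn (fun z => (z - x) / (z - y)) K :=
    ((hasLogOn_moebius_of_isPreconnected hclosed hV (fun u hu h => h (mem_image_of_mem _ hu))
      hx.1 hy.1).comp OnePoint.continuous_coe.continuousOn
        fun z hz => OnePoint.coe_injective.mem_set_image.not.2 (disjoint_right.1 hVK hz)).congr
      fun z hz => (moebius_coe (ne_of_mem_of_not_mem hz (disjoint_left.1 hVK hy.1))).symm
  have hsub := closure_connectedComponentIn_inter_subset hopen x
  refine mem_closure_of_frontier_subset hK hlog hγ hinj hγK hx.2 hy.2
    (hKb.subset ((connectedComponentIn_subset _ _).trans (compl_subset_compl.2 subset_union_left)))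
    (fun z hz => ?_) (mem_connectedComponentIn (hmem hx)) (fun h => hxy (hsub ⟨h, hmem hy⟩)) hm
  rw [hopen.connectedComponentIn.frontier_eq] at hz
  exact not_not.1 fun h => hz.2 (hsub ⟨hz.1, h⟩)

end Crosscut

section PlanarDisks

variable {D : Type*} [TopologicalSpace D] [ContractibleSpace D]

-- Move `x` and `y` to values omitted by `f`, where contractibility provides the logarithm.
theorem hasLogOn_moebius_comp_of_notMem_range {f : D → OnePoint ℂ} (hf : Continuous f) {s : Set D}
    (hs : IsCompact s) {U V : Set ℂ} (hU : IsPreconnected U) (hV : IsPreconnected V)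
    (hUs : ∀ u ∈ U, (u : OnePoint ℂ) ∉ f '' s) (hVs : ∀ v ∈ V, (v : OnePoint ℂ) ∉ f '' s)
    {x x' y y' : ℂ} (hx : x ∈ U) (hx' : x' ∈ U) (hy : y ∈ V) (hy' : y' ∈ V)
    (hfx' : (x' : OnePoint ℂ) ∉ range f) (hfy' : (y' : OnePoint ℂ) ∉ range f) :
    HasLogOn (fun u => moebius x y (f u)) s := by
  have hclosed : IsClosed (f '' s) := (hs.image hf).isClosed
  have hcomp {p q : ℂ} (hlog : HasLogOn (moebius p q) (f '' s)) :
      HasLogOn (fun u => moebius p q (f u)) s := hlog.comp hf.continuousOn (mapsTo_image f s)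
  have hne {p : ℂ} (hp : (p : OnePoint ℂ) ∉ f '' s) (u : D) (hu : u ∈ s) : f u ≠ p :=
    fun h => hp ⟨u, hu, h⟩
  have hxx' := hcomp (hasLogOn_moebius_of_isPreconnected hclosed hU hUs hx hx')
  have hy'y := hcomp (hasLogOn_moebius_of_isPreconnected hclosed hV hVs hy' hy)
  have hx'y' : HasLogOn (fun u => moebius x' y' (f u)) s := by
    obtain ⟨g, hg, hexp⟩ := exists_continuous_log
      ((continuousOn_moebius x' y').comp_continuous hf fun u h => hfy' ⟨u, h⟩)
      fun u => moebius_ne_zero (fun h => hfx' ⟨u, h⟩) fun h => hfy' ⟨u, h⟩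
    exact ⟨g, hg.continuousOn, fun u _ => hexp u⟩
  exact (hxx'.moebius_trans hx'y' (hne (hUs x' hx')) (hne (hVs y' hy'))).moebius_trans hy'y
    (hne (hVs y' hy')) (hne (hVs y hy))

theorem connectedComponentIn_subset_range_of_sideIndex_ne {f : D → OnePoint ℂ}
    (hf : Continuous f) {c : ℝ → D} (hc : Continuous c) {a b e δ : ℝ} (hab : a ≤ b)
    (hbe : b ≤ e) (hce : c e = c a) {γ : ℝ → ℂ} (hγ : ContinuousOn γ (Icc a b))
    (hfc : ∀ t ∈ Icc a b, f (c t) = γ t) {K : Set ℂ} (hδK : Disjoint (ball 0 δ) K)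
    (hfK : ∀ t ∈ Icc b e, ∀ z ∉ K, f (c t) ≠ z) {x y : ℂ}
    (hx : x ∈ ball 0 δ \ γ '' Icc a b) (hy : y ∈ ball 0 δ \ γ '' Icc a b)
    (hne : sideIndex γ a b x ≠ sideIndex γ a b y) :
    y ∉ connectedComponentIn (K ∪ γ '' Icc a b)ᶜ x ∧
      ((∀ w ∈ connectedComponentIn (K ∪ γ '' Icc a b)ᶜ x, (w : OnePoint ℂ) ∈ range f) ∨
        ∀ w ∈ connectedComponentIn (K ∪ γ '' Icc a b)ᶜ y, (w : OnePoint ℂ) ∈ range f) := by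
  have hnlog : ¬ HasLogOn (fun u => moebius x y (f u)) (c '' Icc a e) := fun hlog =>
    hne (sideIndex_eq_of_hasLogOn hf hc hab hbe hce hγ hfc
      (fun t ht w hw => hfK t ht w (disjoint_left.1 hδK hw)) hx hy hlog)
  have hmem {z : ℂ} (hz : z ∈ ball 0 δ \ γ '' Icc a b) :
      z ∈ connectedComponentIn (K ∪ γ '' Icc a b)ᶜ z :=
    mem_connectedComponentIn (not_or.2 ⟨disjoint_left.1 hδK hz.1, hz.2⟩)
  have hcompact : IsCompact (c '' Icc a e) := isCompact_Icc.image hc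
  have hmiss (z w : ℂ) (hw : w ∈ connectedComponentIn (K ∪ γ '' Icc a b)ᶜ z) :
      (w : OnePoint ℂ) ∉ f '' (c '' Icc a e) := by
    have hw' := not_or.1 (connectedComponentIn_subset _ _ hw)
    rintro ⟨_, ⟨t, ht, rfl⟩, htw⟩
    rcases le_total t b with htb | hbt
    · exact hw'.2 ⟨t, ⟨ht.1, htb⟩, OnePoint.coe_injective ((hfc t ⟨ht.1, htb⟩).symm.trans htw)⟩
    · exact hfK t ⟨hbt, ht.2⟩ w hw'.1 htw
  constructor
  · exact fun hyx => hnlog ((hasLogOn_moebius_of_isPreconnected (hcompact.image hf).isClosed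
      isPreconnected_connectedComponentIn (hmiss x) (hmem hx) hyx).comp hf.continuousOn
      (mapsTo_image f _))
  · by_contra! ⟨⟨x', hx', hfx'⟩, y', hy', hfy'⟩
    exact hnlog (hasLogOn_moebius_comp_of_notMem_range hf hcompact
      isPreconnected_connectedComponentIn isPreconnected_connectedComponentIn (hmiss x) (hmiss y)
      (hmem hx) hx' (hmem hy) hy' hfx' hfy')

theorem exists_pair_subset_range {ι : Type*} [Finite ι] [Nonempty ι] {f : ι → D → OnePoint ℂ}
    (hf : ∀ i, Continuous (f i)) {c : ℝ → D} (hc : Continuous c) {a m b e : ℝ}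
    (hm : m ∈ Ioo a b) (hbe : b ≤ e) (hce : c e = c a) {γ : ℝ → ℂ} (hγ : ContinuousOn γ (Icc a b))
    (hinj : InjOn γ (Icc a b)) (hfc : ∀ i, ∀ t ∈ Icc a b, f i (c t) = γ t) (hγm : γ m = 0)
    (hout : ∀ i, ∀ s ∈ Ioo a b, ∀ t ∈ Icc b e, f i (c t) ≠ γ s) :
    ∃ W : Fin 2 → Set ℂ, (∀ k, IsOpen (W k) ∧ IsPreconnected (W k) ∧ 0 ∈ closure (W k)) ∧
      ∀ i, ∃ k, ∀ w ∈ W k, (w : OnePoint ℂ) ∈ range (f i) := by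
  have hab : a ≤ b := (hm.1.trans hm.2).le
  have ⟨i₀⟩ := ‹Nonempty ι›
  obtain ⟨R, hR⟩ := (isCompact_Icc.image_of_continuousOn hγ).isBounded.subset_ball 0
  let K : Set ℂ := (⋃ i, {z : ℂ | (z : OnePoint ℂ) ∈ (fun t => f i (c t)) '' Icc b e}) ∪ (ball 0 R)ᶜ
  have hK : IsClosed K := (isClosed_iUnion_of_finite fun i =>
    (isCompact_Icc.image ((hf i).comp hc)).isClosed.preimage OnePoint.continuous_coe).union
    isOpen_ball.isClosed_compl
  have hKb : Bornology.IsBounded Kᶜ :=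
    isBounded_ball.subset (compl_subset_comm.1 subset_union_right)
  have hfK (i : ι) (t : ℝ) (ht : t ∈ Icc b e) (z : ℂ) (hz : z ∉ K) : f i (c t) ≠ z :=
    fun h => hz (Or.inl (mem_iUnion.2 ⟨i, t, ht, h⟩))
  have hγK (s : ℝ) (hs : s ∈ Ioo a b) : γ s ∉ K := by
    rintro (h | h)
    · obtain ⟨i, t, ht, hts⟩ := mem_iUnion.1 h
      exact hout i s hs t ht hts
    · exact h (hR (mem_image_of_mem γ (Ioo_subset_Icc_self hs)))
  obtain ⟨δ, hδ, hball⟩ := isOpen_iff.1 hK.isOpen_compl 0 (hγm ▸ hγK m hm)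
  have hδK : Disjoint (ball 0 δ) K := subset_compl_iff_disjoint_right.1 hball
  have hfar {s t : ℝ} (hs : s ∈ Icc a b) (ht : t ∈ Icc b e) (hst : c t = c s) : δ ≤ ‖γ s‖ := by
    by_contra! h
    exact hfK i₀ t ht (γ s) (disjoint_left.1 hδK (mem_ball_zero_iff.2 h)) (hst ▸ hfc i₀ s hs)
  obtain ⟨x, hx, y, hy, hne⟩ := exists_sideIndex_ne (Ioo_subset_Icc_self hm) hγ hinj
    (hγm ▸ mem_ball_self hδ) (hfar (left_mem_Icc.2 hab) (right_mem_Icc.2 hbe) hce)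
    (hfar (right_mem_Icc.2 hab) (left_mem_Icc.2 hbe) rfl)
  have hcover (i : ι) {x y : ℂ} := connectedComponentIn_subset_range_of_sideIndex_ne
    (x := x) (y := y) (hf i) hc hab hbe hce hγ (hfc i) hδK (hfK i)
  have hcross {x y : ℂ} := mem_closure_connectedComponentIn_of_crosscut (x := x) (y := y) (m := m)
    hK hKb isOpen_ball (convex_ball 0 δ).isPreconnected hδK hγ hinj hγK
  have hopen : IsOpen (K ∪ γ '' Icc a b)ᶜ :=
    (hK.union (isCompact_Icc.image_of_continuousOn hγ).isClosed).isOpen_compl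
  refine ⟨fun k => connectedComponentIn (K ∪ γ '' Icc a b)ᶜ (![x, y] k), fun k =>
    ⟨hopen.connectedComponentIn, isPreconnected_connectedComponentIn, ?_⟩, fun i => ?_⟩
  · rw [← hγm]
    fin_cases k
    · exact hcross hx hy (hcover i₀ hx hy hne).1 hm
    · exact hcross hy hx (hcover i₀ hy hx hne.symm).1 hm
  · exact Fin.exists_fin_two.2 (hcover i hx hy hne).2

end PlanarDisks

section Sphere

variable {D : Type*} [TopologicalSpace D] [ContractibleSpace D] {ι : Type*} [Finite ι]

theorem exists_pair_subset_range_of_addCircle {f : ι → D → OnePoint ℂ}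
    (hf : ∀ i, Continuous (f i)) {T : ℝ} [hT : Fact (0 < T)] {c : AddCircle T → D}
    (hc : Continuous c) (i₀ : ι) (h0 : f i₀ (c 0) = (0 : ℂ))
    (hagree : ∀ᶠ t in 𝓝 (0 : AddCircle T), ∀ i, f i (c t) = f i₀ (c t))
    (hinj : ∀ᶠ s in 𝓝 (0 : AddCircle T), ∀ i t, f i (c t) = f i (c s) → t = s) :
    ∃ W : Fin 2 → Set ℂ, (∀ k, IsOpen (W k) ∧ IsPreconnected (W k) ∧ 0 ∈ closure (W k)) ∧
      ∀ i, ∃ k, ∀ w ∈ W k, (w : OnePoint ℂ) ∈ range (f i) := by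
  have : Nonempty ι := ⟨i₀⟩
  have hcoe : Continuous ((↑) : ℝ → AddCircle T) := AddCircle.continuous_mk' T
  have hfin : ∀ᶠ t in 𝓝 (0 : AddCircle T), f i₀ (c t) ≠ ∞ :=
    ((hf i₀).comp hc).continuousAt.eventually_ne (by simp [h0])
  have hlocal := (hcoe.tendsto' 0 0 (AddCircle.coe_zero T)).eventually (hagree.and (hinj.and hfin))
  obtain ⟨θ, hθ, hθ_sub⟩ := (nhds_basis_Icc_pos (0 : ℝ)).mem_iff.1
    (inter_mem hlocal (Iio_mem_nhds (half_pos hT.out)))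
  rw [zero_sub, zero_add] at hθ_sub
  have hθT : θ < T / 2 := (hθ_sub (right_mem_Icc.2 (by linarith))).2
  choose! γ hγf using fun t (ht : t ∈ Icc (-θ) θ) =>
    OnePoint.ne_infty_iff_exists.1 (hθ_sub ht).1.2.2
  have hfγ (i : ι) (t : ℝ) (ht : t ∈ Icc (-θ) θ) : f i (c t) = γ t :=
    ((hθ_sub ht).1.1 i).trans (hγf t ht).symm
  have hf_inj (i : ι) {s t : ℝ} (hs : s ∈ Icc (-θ) θ) (ht : t ∈ Ico (-θ) (-θ + T))
      (heq : f i (c t) = γ s) : t = s :=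
    (AddCircle.coe_eq_coe_iff_of_mem_Ico ht ⟨hs.1, by linarith [hs.2]⟩).1
      ((hθ_sub hs).1.2.1 i t (heq.trans (hfγ i s hs).symm))
  refine exists_pair_subset_range (a := -θ) (m := 0) (b := θ) (e := -θ + T) (γ := γ) hf
    (hc.comp hcoe) (by simp [hθ]) (by linarith) (by simp) ?_ ?_ hfγ ?_ ?_
  · rw [OnePoint.isOpenEmbedding_coe.isInducing.continuousOn_iff]
    exact (((hf i₀).comp hc).comp hcoe).continuousOn.congr hγf
  · exact fun s hs t ht hst =>
      hf_inj i₀ ht ⟨hs.1, by linarith [hs.2]⟩ ((hfγ i₀ s hs).trans (congrArg _ hst))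
  · exact OnePoint.coe_injective ((hfγ i₀ 0 (by simp [hθ.le])).symm.trans h0)
  · intro i s hs t ht heq
    have hs' := Ioo_subset_Icc_self hs
    rcases ht.2.eq_or_lt with rfl | hte
    · refine hs.1.ne (hf_inj i hs' ⟨le_rfl, by linarith [hT.out]⟩ ?_)
      rwa [Function.comp_apply, AddCircle.coe_add_period] at heq
    · exact (hs.2.trans_le ht.1).ne' (hf_inj i hs' ⟨by linarith [ht.1], hte⟩ heq)

variable {E : Type*} [NormedAddCommGroup E] [InnerProductSpace ℝ E]
  [Fact (Module.finrank ℝ E = 2 + 1)]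

theorem exists_onePoint_homeomorph_sphere (p : sphere (0 : E) 1) :
    ∃ Ψ : OnePoint ℂ ≃ₜ sphere (0 : E) 1, Ψ (0 : ℂ) = p := by
  have : FiniteDimensional ℝ E := .of_fact_finrank_eq_succ 2
  have hp : p ∈ (stereographic' 2 (-p)).source := by
    simpa using ne_neg_of_mem_unit_sphere ℝ p
  let L : ℂ ≃ₜ EuclideanSpace ℝ (Fin 2) :=
    orthonormalBasisOneI.repr.toHomeomorph.trans
      (Homeomorph.addRight (stereographic' 2 (-p) p))
  have hemb : IsEmbedding ((stereographic' 2 (-p)).symm ∘ L) :=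
    ((stereographic' 2 (-p)).symm.isOpenEmbedding (by simp)).isEmbedding.comp L.isEmbedding
  have hrange : range ((stereographic' 2 (-p)).symm ∘ L) = {-p}ᶜ := by
    rw [range_comp, L.surjective.range_eq,
      ← stereographic'_target (n := 2) (-p), ← stereographic'_source (n := 2) (-p)]
    exact (stereographic' 2 (-p)).symm_image_target_eq_source
  refine ⟨OnePoint.equivOfIsEmbeddingOfRangeEq _ _ hemb hrange, ?_⟩
  have hL : L 0 = stereographic' 2 (-p) p := by simp [L]
  change (stereographic' 2 (-p)).symm (L 0) = p
  rw [hL, (stereographic' 2 (-p)).left_inv hp]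

theorem exists_pair_subset_range_sphere {f : ι → D → sphere (0 : E) 1}
    (hf : ∀ i, Continuous (f i)) {T : ℝ} [Fact (0 < T)]
    {c : AddCircle T → D} (hc : Continuous c) (i₀ : ι)
    (hagree : ∀ᶠ t in 𝓝 (0 : AddCircle T), ∀ i, f i (c t) = f i₀ (c t))
    (hinj : ∀ᶠ s in 𝓝 (0 : AddCircle T), ∀ i t, f i (c t) = f i (c s) → t = s) :
    ∃ W : Fin 2 → Set (sphere (0 : E) 1),
      (∀ k, IsOpen (W k) ∧ IsPreconnected (W k) ∧ f i₀ (c 0) ∈ closure (W k)) ∧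
      ∀ i, ∃ k, W k ⊆ range (f i) := by
  obtain ⟨Ψ, hΨ⟩ := exists_onePoint_homeomorph_sphere (f i₀ (c 0))
  obtain ⟨W, hW, hcov⟩ := exists_pair_subset_range_of_addCircle (f := fun i u => Ψ.symm (f i u))
    (fun i => Ψ.symm.continuous.comp (hf i)) hc i₀ (by rw [← hΨ, Ψ.symm_apply_apply])
    (by simpa only [Ψ.symm.injective.eq_iff] using hagree)
    (by simpa only [Ψ.symm.injective.eq_iff] using hinj)
  have hchart : IsOpenEmbedding fun w : ℂ => Ψ w :=
    Ψ.isOpenEmbedding.comp OnePoint.isOpenEmbedding_coe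
  refine ⟨fun k => (fun w : ℂ => Ψ w) '' W k, fun k => ⟨hchart.isOpenMap _ (hW k).1,
    (hW k).2.1.image _ hchart.continuous.continuousOn, ?_⟩, fun i => (hcov i).imp fun k hk => ?_⟩
  · exact hΨ ▸ image_closure_subset_closure_image hchart.continuous (mem_image_of_mem _ (hW k).2.2)
  · rintro _ ⟨w, hw, rfl⟩
    obtain ⟨u, hu⟩ := hk w hw
    exact ⟨u, Ψ.symm_apply_eq.1 hu⟩

end Sphere

section Rotation

variable {V : Type*} [NormedAddCommGroup V] [InnerProductSpace ℝ V]
  [Fact (Module.finrank ℝ V = 2)] (o : Orientation ℝ V (Fin 2))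

theorem continuous_rotation_apply (x : V) : Continuous fun θ : Real.Angle => o.rotation θ x := by
  simp only [Orientation.rotation_apply]
  exact (Real.Angle.continuous_cos.smul continuous_const).add
    (Real.Angle.continuous_sin.smul continuous_const)

theorem rotation_apply_injective {x : V} (hx : x ≠ 0) :
    Function.Injective fun θ : Real.Angle => o.rotation θ x := fun θ ψ h => by
  rw [← o.oangle_rotation_self_right hx θ, ← o.oangle_rotation_self_right hx ψ]
  exact congrArg (o.oangle x) h

end Rotation

theorem circleInterior_mem_nhdsWithin {A : Set (EuclideanSpace ℝ (Fin 2))}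
    {q : EuclideanSpace ℝ (Fin 2)} (hq : q ∈ circleInterior A) :
    circleInterior A ∈ 𝓝[circleS] q := by
  obtain ⟨-, V, hV, hqV, hVA⟩ := hq
  exact mem_nhdsWithin.2 ⟨V, hV, hqV, fun x hx => ⟨hVA hx, V, hV, hx.1, hVA⟩⟩

theorem common_image_of_three_disks_general {ι : Type*} [Finite ι]
    {A : Set (EuclideanSpace ℝ (Fin 2))} (hA : A ⊆ circleS)
    {q : EuclideanSpace ℝ (Fin 2)} (hq : q ∈ circleInterior A)
    {F : ι → EuclideanSpace ℝ (Fin 2) → EuclideanSpace ℝ (Fin 3)} (i₀ : ι)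
    (hFcont : ∀ i, ContinuousOn (F i) diskS)
    (hFmaps : ∀ i, MapsTo (F i) diskS sphereS)
    (hagree : ∀ i j, ∀ x ∈ A, F i x = F j x)
    (hinjarc : ∀ i, ∀ a ∈ circleInterior A, ∀ b ∈ circleS, F i b = F i a → b = a) :
    ∃ W : Fin 2 → Set (EuclideanSpace ℝ (Fin 3)),
      (∀ k, (∃ V, IsOpen V ∧ W k = V ∩ sphereS) ∧ IsPreconnected (W k) ∧
        F i₀ q ∈ closure (W k)) ∧ ∀ i, ∃ k, W k ⊆ F i '' diskS := by
  have : Fact (Module.finrank ℝ (EuclideanSpace ℝ (Fin 2)) = 2) := ⟨by simp⟩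
  have : Fact (Module.finrank ℝ (EuclideanSpace ℝ (Fin 3)) = 2 + 1) := ⟨by simp⟩
  have : ContractibleSpace diskS := (convex_closedBall 0 1).contractibleSpace (by simp)
  have hq1 : ‖q‖ = 1 := mem_sphere_zero_iff_norm.1 (hA hq.1)
  let o := (EuclideanSpace.basisFun (Fin 2) ℝ).toBasis.orientation
  have hcircle (t : Real.Angle) : o.rotation t q ∈ circleS := by simp [circleS, hq1]
  let c (t : Real.Angle) : diskS := ⟨o.rotation t q, sphere_subset_closedBall (hcircle t)⟩
  have hrot := continuous_rotation_apply o q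
  have hc0 : (c 0 : EuclideanSpace ℝ (Fin 2)) = q := by simp [c]
  have hc : Tendsto (fun t => (c t : EuclideanSpace ℝ (Fin 2))) (𝓝 0) (𝓝[circleS] q) :=
    tendsto_nhdsWithin_iff.2 ⟨hrot.tendsto' 0 q hc0, Eventually.of_forall hcircle⟩
  have harc : ∀ᶠ t in 𝓝 (0 : Real.Angle), (c t : EuclideanSpace ℝ (Fin 2)) ∈ circleInterior A :=
    hc (circleInterior_mem_nhdsWithin hq)
  have : Fact (0 < 2 * Real.pi) := ⟨Real.two_pi_pos⟩
  obtain ⟨W, hW, hcov⟩ := exists_pair_subset_range_sphere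
    (f := fun i => (hFmaps i).restrict (F i) diskS sphereS) (c := c)
    (fun i => (hFcont i).mapsToRestrict (hFmaps i)) (hrot.subtype_mk _) i₀
    (harc.mono fun t ht i => Subtype.ext (hagree i i₀ _ ht.1))
    (harc.mono fun s hs i t h => rotation_apply_injective o (norm_ne_zero_iff.1 (by simp [hq1]))
      (hinjarc i _ hs _ (hcircle t) (congrArg Subtype.val h)))
  refine ⟨fun k => Subtype.val '' W k, fun k => ⟨?_, ?_, ?_⟩, fun i => (hcov i).imp fun k hk => ?_⟩
  · obtain ⟨V, hV, hVW⟩ := isOpen_induced_iff.1 (hW k).1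
    exact ⟨V, hV, by simp only [← hVW, Subtype.image_preimage_coe, inter_comm]; rfl⟩
  · exact (hW k).2.1.image _ continuous_subtype_val.continuousOn
  · have hcl := image_closure_subset_closure_image continuous_subtype_val
      (mem_image_of_mem _ (hW k).2.2)
    exact hc0 ▸ hcl
  · rintro _ ⟨w, hw, rfl⟩
    obtain ⟨u, rfl⟩ := hk hw
    exact mem_image_of_mem _ u.2

/-- **Common image claim for three disks glued along an arc.**  Let `A ⊆ S¹` be a closed arc,
`q` a point of its (relative) interior, and `F₁, F₂, F₃ : D² → S²` continuous maps agreeing on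
`A`, such that every point of the interior of `A` is an injective point of each restriction
`Gᵢ = Fᵢ|_{S¹}`.  Then, with `p := F₁ q`, some connected open subset `W` of `S²` contains `p`
in its closure and lies in the image of two of the maps `Fᵢ`. -/
theorem common_image_of_three_disks
    (A : Set (EuclideanSpace ℝ (Fin 2))) (hA : IsClosedArc A)
    (q : EuclideanSpace ℝ (Fin 2)) (hq : q ∈ circleInterior A)
    (F : Fin 3 → EuclideanSpace ℝ (Fin 2) → EuclideanSpace ℝ (Fin 3))
    (hFcont : ∀ i, ContinuousOn (F i) diskS)
    (hFmaps : ∀ i, MapsTo (F i) diskS sphereS)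
    (hagree : ∀ i j, ∀ x ∈ A, F i x = F j x)
    (hinjarc : ∀ i, ∀ a ∈ circleInterior A, ∀ b ∈ circleS, F i b = F i a → b = a) :
    ∃ i j : Fin 3, i ≠ j ∧ ∃ W : Set (EuclideanSpace ℝ (Fin 3)),
      (∃ V, IsOpen V ∧ W = V ∩ sphereS) ∧ IsPreconnected W ∧
      F 0 q ∈ closure W ∧ W ⊆ F i '' diskS ∧ W ⊆ F j '' diskS := by
  obtain ⟨W, hW, hcov⟩ :=
    common_image_of_three_disks_general hA.1 hq 0 hFcont hFmaps hagree hinjarc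
  choose k hk using hcov
  obtain ⟨i, j, hij, hkij⟩ := Fintype.exists_ne_map_eq_of_card_lt k (by simp)
  obtain ⟨hopen, hconn, hclosure⟩ := hW (k i)
  exact ⟨i, j, hij, W (k i), hopen, hconn, hclosure, hk i, hkij ▸ hk j⟩
end
end

section
/- No branching at carpet points (abstract core of the main theorem): Let T ⊂ ℝ² be the tripod, i.e. the union of the three straight segments joining the origin o to the points (1,0), (−1/2, √3/2), (−1/2, −√3/2). Let (Uᵢ)_{i ∈ ℕ} be a countable family of nonempty open round disks in S² whose closures are pairwise disjoint and whose union is dense in S², and set I* := S² \ ⋃ᵢ Uᵢ. Then there is no continuous map g : T × [0,1] → S² such that g is injective on g⁻¹(I*) and g(o, s) ∈ S² \ ⋃ᵢ closure(Uᵢ) for some s ∈ (0,1). -/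
open Metric Set

noncomputable section

/-- The unit sphere in Euclidean 3-space, as a metric space with the metric induced from ℝ³. -/
abbrev Sph : Type := (Metric.sphere (0 : EuclideanSpace ℝ (Fin 3)) 1 : Set (EuclideanSpace ℝ (Fin 3)))

/-- The tripod `T ⊂ ℝ²`: the union of the three straight segments joining the origin to
`(1,0)`, `(-1/2, √3/2)` and `(-1/2, -√3/2)`. -/
def tripod : Set (ℝ × ℝ) :=
  segment ℝ (0 : ℝ × ℝ) (1, 0) ∪ segment ℝ (0 : ℝ × ℝ) (-(1/2), Real.sqrt 3 / 2) ∪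
    segment ℝ (0 : ℝ × ℝ) (-(1/2), -(Real.sqrt 3 / 2))

/-!
Disjoint round disks form a null family: only finitely many have radius at least a given `ε`. In the
gnomonic chart at a point `p` outside all closed disks, the small disks are convex. Swelling a small
round ball about `p` by the disks straddling its boundary therefore gives an open set `W` whose
frontier avoids every disk and, by pushing each straddling disk radially back onto the boundary of
the ball, embeds in a circle. Two legs of the tripod sweep out a disk through `p = g (o, s)` whose
boundary stays outside `W`, and `g` is injective where it hits `frontier W`. If this disk missed a
point of `frontier W`, its trace there would embed in a line, so `z` would have a continuous
logarithm on it and it could not separate the centre from the boundary. Hence it covers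
`frontier W`; but the third leg also crosses `frontier W`, against injectivity.
-/

open Filter Topology

section ContinuousLogarithms

variable {X : Type*} [TopologicalSpace X]

/-- `u` has a continuous logarithm on `S`. -/
def HasContinuousLogOn (u : X → ℂ) (S : Set X) : Prop :=
  ∃ L : X → ℂ, ContinuousOn L S ∧ EqOn (Complex.exp ∘ L) u S

variable {u : X → ℂ} {S T : Set X}

lemma HasContinuousLogOn.mono (h : HasContinuousLogOn u T) (hST : S ⊆ T) :
    HasContinuousLogOn u S :=
  let ⟨L, hL, hLu⟩ := h
  ⟨L, hL.mono hST, hLu.mono hST⟩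

lemma hasContinuousLogOn_preimage_ball (hu : Continuous u) (w : ℂ) :
    HasContinuousLogOn u (u ⁻¹' ball w ‖w‖) := by
  have hw {x : X} (hx : x ∈ u ⁻¹' ball w ‖w‖) : w ≠ 0 :=
    norm_pos_iff.1 (dist_nonneg.trans_lt (mem_ball.1 hx))
  have hslit : ∀ x ∈ u ⁻¹' ball w ‖w‖, u x / w ∈ Complex.slitPlane := fun x hx ↦ by
    refine Complex.ball_one_subset_slitPlane ?_
    rw [mem_ball, dist_eq_norm, div_sub_one (hw hx), norm_div,
      div_lt_one (norm_pos_iff.2 (hw hx)), ← dist_eq_norm]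
    exact hx
  refine ⟨fun x ↦ Complex.log (u x / w) + Complex.log w,
    ((hu.div_const w).continuousOn.clog hslit).add continuousOn_const, fun x hx ↦ ?_⟩
  simp only [Function.comp_apply]
  rw [Complex.exp_add, Complex.exp_log (Complex.slitPlane_ne_zero (hslit x hx)),
    Complex.exp_log (hw hx), div_mul_cancel₀ _ (hw hx)]

lemma HasContinuousLogOn.union (hS : IsClosed S) (hT : IsClosed T)
    (hST : (S ∩ T).Subsingleton) (huS : HasContinuousLogOn u S) (huT : HasContinuousLogOn u T) :
    HasContinuousLogOn u (S ∪ T) := by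
  classical
  obtain ⟨L, hL, hLu⟩ := huS
  obtain ⟨M, hM, hMu⟩ := huT
  obtain ⟨c, hc, hLM⟩ : ∃ c, Complex.exp c = 1 ∧ ∀ x ∈ S ∩ T, L x = M x + c := by
    obtain h | ⟨x, hx⟩ := hST.eq_empty_or_singleton
    · exact ⟨0, Complex.exp_zero, by simp [h]⟩
    · obtain ⟨hxS, hxT⟩ : x ∈ S ∩ T := hx ▸ mem_singleton x
      refine ⟨L x - M x, ?_, by simp [hx]⟩
      have hLMx : Complex.exp (L x) = Complex.exp (M x) := (hLu hxS).trans (hMu hxT).symm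
      rw [Complex.exp_sub, hLMx, div_self (Complex.exp_ne_zero _)]
  have heqS : EqOn (S.piecewise L (M · + c)) L S := piecewise_eqOn _ _ _
  have heqT : EqOn (S.piecewise L (M · + c)) (M · + c) T := fun x hx ↦ by
    by_cases hxS : x ∈ S
    · rw [piecewise_eq_of_mem _ _ _ hxS, hLM x ⟨hxS, hx⟩]
    · rw [piecewise_eq_of_notMem _ _ _ hxS]
  refine ⟨S.piecewise L (M · + c), (hL.congr heqS).union_of_isClosed
    ((hM.add continuousOn_const).congr heqT) hS hT, ?_⟩
  rintro x (hx | hx)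
  · rw [Function.comp_apply, heqS hx]
    exact hLu hx
  · rw [Function.comp_apply, heqT hx, Complex.exp_add, hc, mul_one]
    exact hMu hx

lemma hasContinuousLogOn_preimage_Iic_iff {θ : X → ℝ} (hθ : Continuous θ)
    (hinj : Function.Injective θ) (hlocal : ∀ t, ∃ O ∈ 𝓝 t, HasContinuousLogOn u (θ ⁻¹' O))
    (s t : ℝ) : HasContinuousLogOn u (θ ⁻¹' Iic s) ↔ HasContinuousLogOn u (θ ⁻¹' Iic t) := by
  have iff_of_le {s t : ℝ} (hst : s ≤ t) (hIcc : HasContinuousLogOn u (θ ⁻¹' Icc s t)) :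
      HasContinuousLogOn u (θ ⁻¹' Iic s) ↔ HasContinuousLogOn u (θ ⁻¹' Iic t) := by
    refine ⟨fun hIic ↦ ?_, fun h ↦ h.mono (preimage_mono (Iic_subset_Iic.2 hst))⟩
    rw [← Iic_union_Icc_eq_Iic hst, preimage_union]
    refine hIic.union (isClosed_Iic.preimage hθ) (isClosed_Icc.preimage hθ)
      (fun x hx y hy ↦ hinj ?_) hIcc
    exact (hx.1.antisymm hx.2.1).trans (hy.1.antisymm hy.2.1).symm
  have iff_of_near (s : ℝ) : ∀ᶠ t in 𝓝 s,
      (HasContinuousLogOn u (θ ⁻¹' Iic s) ↔ HasContinuousLogOn u (θ ⁻¹' Iic t)) := by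
    obtain ⟨O, hO, hlog⟩ := hlocal s
    obtain ⟨ε, hε, hball⟩ := Metric.mem_nhds_iff.1 hO
    have hconv : OrdConnected (ball s ε) := (convex_ball s ε).ordConnected
    have hIcc {a b : ℝ} (ha : a ∈ ball s ε) (hb : b ∈ ball s ε) :
        HasContinuousLogOn u (θ ⁻¹' Icc a b) :=
      hlog.mono (preimage_mono ((hconv.out ha hb).trans hball))
    filter_upwards [ball_mem_nhds s hε] with t ht
    obtain hst | hts := le_total s t
    · exact iff_of_le hst (hIcc (mem_ball_self hε) ht)
    · exact (iff_of_le hts (hIcc ht (mem_ball_self hε))).symm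
  exact PreconnectedSpace.induction₂'
    (fun s t ↦ HasContinuousLogOn u (θ ⁻¹' Iic s) ↔ HasContinuousLogOn u (θ ⁻¹' Iic t))
    (fun s ↦ (iff_of_near s).mono fun _ h ↦ ⟨h, h.symm⟩) ⟨fun _ _ _ ↦ Iff.trans⟩ s t

lemma hasContinuousLogOn_univ_of_injective_real [CompactSpace X] {θ : X → ℝ} (hθ : Continuous θ)
    (hinj : Function.Injective θ) (hu : Continuous u) (hu0 : ∀ x, u x ≠ 0) :
    HasContinuousLogOn u univ := by
  have hθe : IsClosedEmbedding θ := hθ.isClosedEmbedding hinj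
  have hlocal (t : ℝ) : ∃ O ∈ 𝓝 t, HasContinuousLogOn u (θ ⁻¹' O) := by
    by_cases ht : t ∈ range θ
    · obtain ⟨x, rfl⟩ := ht
      have hx : u ⁻¹' ball (u x) ‖u x‖ ∈ 𝓝 x :=
        hu.continuousAt.preimage_mem_nhds (ball_mem_nhds _ (norm_pos_iff.2 (hu0 x)))
      rw [hθe.isInducing.nhds_eq_comap] at hx
      obtain ⟨O, hO, hOx⟩ := hx
      exact ⟨O, hO, (hasContinuousLogOn_preimage_ball hu (u x)).mono hOx⟩
    · exact ⟨(range θ)ᶜ, hθe.isClosed_range.isOpen_compl.mem_nhds ht,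
        0, continuousOn_const, fun x hx ↦ (hx (mem_range_self x)).elim⟩
  obtain ⟨a, ha⟩ := (isCompact_range hθ).bddBelow
  obtain ⟨b, hb⟩ := (isCompact_range hθ).bddAbove
  have hempty : HasContinuousLogOn u (θ ⁻¹' Iic (a - 1)) := by
    refine ⟨0, continuousOn_const, fun x hx ↦ ?_⟩
    have hax : a ≤ θ x := ha (mem_range_self x)
    have hxa : θ x ≤ a - 1 := hx
    linarith
  exact ((hasContinuousLogOn_preimage_Iic_iff hθ hinj hlocal (a - 1) b).1 hempty).mono
    fun x _ ↦ hb (mem_range_self x)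

lemma hasContinuousLogOn_of_injOn_real {θ : X → ℝ} (hS : IsCompact S) (hθ : ContinuousOn θ S)
    (hinj : InjOn θ S) (hu : ContinuousOn u S) (hu0 : ∀ x ∈ S, u x ≠ 0) :
    HasContinuousLogOn u S := by
  have : CompactSpace S := isCompact_iff_compactSpace.1 hS
  obtain ⟨L, hL, hLu⟩ := hasContinuousLogOn_univ_of_injective_real
    (continuousOn_iff_continuous_domRestrict.1 hθ) hinj.injective
    (continuousOn_iff_continuous_domRestrict.1 hu) fun x ↦ hu0 x x.2
  have hext (x : S) : Function.extend Subtype.val L 0 x = L x :=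
    Subtype.val_injective.extend_apply _ _ x
  refine ⟨Function.extend Subtype.val L 0, continuousOn_iff_continuous_domRestrict.2 ?_,
    fun x hx ↦ ?_⟩
  · exact (continuousOn_univ.1 hL).congr fun x ↦ (hext x).symm
  · exact (congrArg Complex.exp (hext ⟨x, hx⟩)).trans (hLu (mem_univ (⟨x, hx⟩ : S)))

/-- Winding number obstruction: lifting the loop `z ↦ z` through `exp` adds `2πi`. -/
lemma not_hasContinuousLogOn_id_sphere {R : ℝ} (hR : 0 < R) :
    ¬ HasContinuousLogOn id (sphere (0 : ℂ) R) := by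
  rintro ⟨L, hL, hLid⟩
  have hmem (t : ℝ) : circleMap 0 R t ∈ sphere (0 : ℂ) R := circleMap_mem_sphere _ hR.le t
  have hexp (t : ℝ) : Complex.exp (L (circleMap 0 R t)) = circleMap 0 R t := hLid (hmem t)
  have h0 : circleMap 0 R 0 = R := by simp [circleMap]
  have hlift : (fun t : ℝ ↦ L (circleMap 0 R t)) = fun t : ℝ ↦ L R + t * Complex.I := by
    refine Complex.isCoveringMap_exp.eq_of_comp_eq
      (hL.comp_continuous (continuous_circleMap 0 R) hmem) (by fun_prop)
      (funext fun t ↦ Subtype.ext ?_) 0 (by simp [h0])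
    have hLR : Complex.exp (L R) = R := by simpa only [h0] using hexp 0
    simp only [Function.comp_apply]
    rw [hexp, Complex.exp_add, hLR, circleMap_zero]
  have hperiod := congrFun hlift (2 * Real.pi)
  simp [circleMap] at hperiod

lemma hasContinuousLogOn_univ_of_ne_zero {F : ℂ → ℂ} (hF : Continuous F) (hF0 : ∀ z, F z ≠ 0) :
    HasContinuousLogOn F univ := by
  have : ContractibleSpace (univ : Set ℂ) := convex_univ.contractibleSpace univ_nonempty
  have hsc : IsSimplyConnected (univ : Set ℂ) := SimplyConnectedSpace.ofContractible _
  exact Complex.exists_continuousOn_eqOn_exp_comp hsc isOpen_univ hF.continuousOn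
    (by simpa using hF0)

/-- Half of Eilenberg's criterion: a compact set on which `z` has a continuous logarithm does not
separate `0` from `∞`. -/
lemma not_hasContinuousLogOn_id_inter {A C : Set ℂ} (hA : IsClosed A)
    (hAb : Bornology.IsBounded A) (hC : IsClosed C) (hAC : A ∪ C = univ) (h0 : (0 : ℂ) ∉ C) :
    ¬ HasContinuousLogOn id (A ∩ C) := by
  classical
  rintro ⟨L, hL, hLid⟩
  obtain ⟨M, hM⟩ := ContinuousMap.exists_restrict_eq (hA.inter hC)
    ⟨(A ∩ C).domRestrict L, continuousOn_iff_continuous_domRestrict.1 hL⟩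
  have hML : EqOn (Complex.exp ∘ M) id (A ∩ C) := fun z hz ↦ by
    have hMz : M z = L z := DFunLike.congr_fun hM ⟨z, hz⟩
    rw [Function.comp_apply, hMz]
    exact hLid hz
  set F : ℂ → ℂ := C.piecewise id (Complex.exp ∘ M)
  have hFC : EqOn F id C := piecewise_eqOn _ _ _
  have hFA : EqOn F (Complex.exp ∘ M) A := fun z hz ↦ by
    by_cases hzC : z ∈ C
    · exact (hFC hzC).trans (hML ⟨hz, hzC⟩).symm
    · exact piecewise_eq_of_notMem _ _ _ hzC
  have hFcont : Continuous F := by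
    rw [← continuousOn_univ, ← hAC]
    exact ((Complex.continuous_exp.comp M.continuous).continuousOn.congr hFA).union_of_isClosed
      (continuousOn_id.congr hFC) hA hC
  have hF0 (z : ℂ) : F z ≠ 0 := by
    obtain hz | hz := hAC.ge (mem_univ z)
    · rw [hFA hz]
      exact Complex.exp_ne_zero _
    · rw [hFC hz]
      exact fun h ↦ h0 (h ▸ hz)
  obtain ⟨R, hR, hAR⟩ := hAb.subset_ball_lt 0 0
  obtain ⟨N, hN, hNF⟩ := hasContinuousLogOn_univ_of_ne_zero hFcont hF0
  refine not_hasContinuousLogOn_id_sphere hR ⟨N, hN.mono (subset_univ _), fun z hz ↦ ?_⟩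
  have hzA : z ∉ A := fun h ↦ (mem_ball.1 (hAR h)).ne hz
  exact (hNF (mem_univ z)).trans (hFC ((hAC.ge (mem_univ z)).resolve_left hzA))

end ContinuousLogarithms

section Separation

variable {X : Type*} [TopologicalSpace X]

/-- `S` embeds in the unit sphere of `F`. For compact `S`, a continuous injection is an
embedding. -/
def EmbedsInUnitSphere (F : Type*) [NormedAddCommGroup F] (S : Set X) : Prop :=
  ∃ π : X → F, ContinuousOn π S ∧ InjOn π S ∧ MapsTo π S (sphere 0 1)

lemma EmbedsInUnitSphere.mono {F : Type*} [NormedAddCommGroup F] {S S' : Set X}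
    (hS : EmbedsInUnitSphere F S) (h : S' ⊆ S) : EmbedsInUnitSphere F S' :=
  let ⟨π, hπ, hinj, hmaps⟩ := hS
  ⟨π, hπ.mono h, hinj.mono h, hmaps.mono_left h⟩

lemma EmbedsInUnitSphere.of_linearIsometryEquiv {F F' : Type*} [NormedAddCommGroup F]
    [NormedSpace ℝ F] [NormedAddCommGroup F'] [NormedSpace ℝ F'] (e : F ≃ₗᵢ[ℝ] F') {S : Set X}
    (hS : EmbedsInUnitSphere F S) : EmbedsInUnitSphere F' S :=
  let ⟨π, hπ, hinj, hmaps⟩ := hS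
  ⟨e ∘ π, e.continuous.comp_continuousOn hπ, e.injective.comp_injOn hinj,
    fun x hx ↦ by simpa using hmaps hx⟩

lemma exists_continuousOn_injOn_real_sphere_diff_singleton {q : ℂ} (hq : ‖q‖ = 1) :
    ∃ φ : ℂ → ℝ, ContinuousOn φ (sphere 0 1 \ {q}) ∧ InjOn φ (sphere 0 1 \ {q}) := by
  have hq0 : q ≠ 0 := norm_ne_zero_iff.1 (hq ▸ one_ne_zero)
  have hnorm {z : ℂ} (hz : ‖z‖ = 1) : ‖-(z / q)‖ = 1 := by
    rw [norm_neg, norm_div, hz, hq, div_one]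
  refine ⟨fun z ↦ (-(z / q)).arg, fun z hz ↦ ?_, fun z hz w hw hzw ↦ ?_⟩
  · have hz1 : ‖z‖ = 1 := mem_sphere_zero_iff_norm.1 hz.1
    refine ((Complex.continuousAt_arg ?_).comp (by fun_prop)).continuousWithinAt
    refine Complex.mem_slitPlane_iff_arg.2 ⟨fun hπ ↦ hz.2 ?_, norm_ne_zero_iff.1 ?_⟩
    · have h := Complex.norm_mul_exp_arg_mul_I (-(z / q))
      rw [hπ, hnorm hz1, Complex.exp_pi_mul_I, Complex.ofReal_one, one_mul, neg_inj] at h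
      exact ((div_eq_one_iff_eq hq0).1 h.symm)
    · rw [hnorm hz1]
      exact one_ne_zero
  · have h := Complex.ext_norm_arg ((hnorm (mem_sphere_zero_iff_norm.1 hz.1)).trans
      (hnorm (mem_sphere_zero_iff_norm.1 hw.1)).symm) hzw
    exact (div_left_inj' hq0).1 (neg_injective h)

/-- If a disk enters `W` with its boundary circle outside `W`, and `frontier W` embeds in a circle,
then the disk covers `frontier W`: otherwise its trace on `frontier W` would embed in a line, and
so could not separate the centre from the boundary circle. -/
lemma frontier_subset_image_closedBall {W : Set X} {G : ℂ → X} {R : ℝ} (hR : 0 < R)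
    (hG : ContinuousOn G (closedBall 0 R)) (hW : IsOpen W) (h0 : G 0 ∈ W)
    (hsphere : MapsTo G (sphere 0 R) Wᶜ) (hinj : InjOn G (closedBall 0 R ∩ G ⁻¹' frontier W))
    (hcircle : EmbedsInUnitSphere ℂ (frontier W)) : frontier W ⊆ G '' closedBall 0 R := by
  intro q hq
  by_contra hqG
  obtain ⟨π, hπ, hπinj, hπmaps⟩ := hcircle
  obtain ⟨φ, hφ, hφinj⟩ := exists_continuousOn_injOn_real_sphere_diff_singleton
    (mem_sphere_zero_iff_norm.1 (hπmaps hq))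
  set K : Set ℂ := closedBall 0 R ∩ G ⁻¹' frontier W
  have hpre {S : Set X} (hS : IsClosed S) : IsClosed (closedBall 0 R ∩ G ⁻¹' S) :=
    hG.preimage_isClosed_of_isClosed isClosed_closedBall hS
  have hK : IsCompact K := (isCompact_closedBall 0 R).of_isClosed_subset (hpre isClosed_frontier)
    inter_subset_left
  have hKπ : MapsTo (π ∘ G) K (sphere 0 1 \ {π q}) := fun z hz ↦
    ⟨hπmaps hz.2, fun h ↦ hqG ⟨z, hz.1, hπinj hz.2 hq h⟩⟩
  have hlog : HasContinuousLogOn id K := by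
    refine hasContinuousLogOn_of_injOn_real (θ := φ ∘ π ∘ G) hK ?_ ?_ continuousOn_id ?_
    · exact hφ.comp (hπ.comp (hG.mono inter_subset_left) fun z hz ↦ hz.2) hKπ
    · exact hφinj.comp (hπinj.comp hinj fun z hz ↦ hz.2) hKπ
    · rintro z hz rfl
      exact hW.inter_frontier_eq.le ⟨h0, hz.2⟩
  refine not_hasContinuousLogOn_id_inter (A := closedBall 0 R ∩ G ⁻¹' closure W)
    (C := closedBall 0 R ∩ G ⁻¹' Wᶜ ∪ (ball 0 R)ᶜ) (hpre isClosed_closure)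
    (isBounded_closedBall.subset inter_subset_left)
    ((hpre hW.isClosed_compl).union isOpen_ball.isClosed_compl) ?_ ?_ (hlog.mono ?_)
  · refine eq_univ_of_forall fun z ↦ ?_
    by_cases hz : z ∈ ball 0 R
    · by_cases hzW : G z ∈ W
      · exact Or.inl ⟨ball_subset_closedBall hz, subset_closure hzW⟩
      · exact Or.inr (Or.inl ⟨ball_subset_closedBall hz, hzW⟩)
    · exact Or.inr (Or.inr hz)
  · rintro (h | h)
    · exact h.2 h0
    · exact h (mem_ball_self hR)
  · rintro z ⟨⟨hz, hzW⟩, h⟩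
    have hzW' : G z ∉ W := h.elim And.right fun hzR ↦
      hsphere ((mem_closedBall.1 hz).antisymm (not_lt.1 hzR))
    exact ⟨hz, hW.frontier_eq ▸ ⟨hzW, hzW'⟩⟩

lemma inter_frontier_nonempty_of_isPreconnected {S W : Set X} (hS : IsPreconnected S)
    (hSW : (S ∩ W).Nonempty) (hSW' : (S ∩ Wᶜ).Nonempty) : (S ∩ frontier W).Nonempty := by
  rw [frontier_eq_closure_inter_closure]
  exact isPreconnected_closed_iff.1 hS _ _ isClosed_closure isClosed_closure
    (fun x _ ↦ (em (x ∈ W)).imp (@subset_closure _ _ _ x) (@subset_closure _ _ _ x))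
    (hSW.mono (inter_subset_inter_right S subset_closure))
    (hSW'.mono (inter_subset_inter_right S subset_closure))

lemma exists_mem_Ioc_eq_of_frontier_embedsInUnitSphere {W : Set X} {G : ℂ → X} {R : ℝ} (hR : 0 < R)
    (hG : ContinuousOn G (closedBall 0 R)) (hW : IsOpen W) (h0 : G 0 ∈ W)
    (hsphere : MapsTo G (sphere 0 R) Wᶜ) (hinj : InjOn G (closedBall 0 R ∩ G ⁻¹' frontier W))
    (hcircle : EmbedsInUnitSphere ℂ (frontier W)) {γ : ℝ → X} (hγ : ContinuousOn γ (Icc 0 1))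
    (hγ0 : γ 0 ∈ W) (hγ1 : γ 1 ∉ W) :
    ∃ t ∈ Ioc (0 : ℝ) 1, ∃ z ∈ closedBall 0 R, G z = γ t ∧ γ t ∈ frontier W := by
  obtain ⟨_, ⟨t, ht, rfl⟩, htW⟩ := inter_frontier_nonempty_of_isPreconnected
    (isPreconnected_Icc.image γ hγ) ⟨γ 0, mem_image_of_mem γ (left_mem_Icc.2 zero_le_one), hγ0⟩
    ⟨γ 1, mem_image_of_mem γ (right_mem_Icc.2 zero_le_one), hγ1⟩
  have ht0 : t ≠ 0 := by
    rintro rfl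
    exact hW.inter_frontier_eq.le ⟨hγ0, htW⟩
  obtain ⟨z, hz, hzt⟩ := frontier_subset_image_closedBall hR hG hW h0 hsphere hinj hcircle htW
  exact ⟨t, ⟨ht.1.lt_of_ne' ht0, ht.2⟩, z, hz, hzt, htW⟩

end Separation

section RadialProjection

variable {E : Type*} [NormedAddCommGroup E] {a w w' : E} {r : ℝ}

lemma ball_neg_mem_nhds_zero (ha : ‖a‖ < r) : ball (-a) r ∈ 𝓝 (0 : E) :=
  isOpen_ball.mem_nhds (by simpa using ha)

lemma mem_sphere_neg_sub_iff : w - a ∈ sphere (-a) r ↔ ‖w‖ = r := by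
  rw [mem_sphere, dist_eq_norm, sub_neg_eq_add, sub_add_cancel]

variable [NormedSpace ℝ E]

/-- The factor by which the sphere of radius `r` about the origin has to be dilated about `a` to
pass through `w`. Meaningful for `‖a‖ < r`. -/
def radialFactor (r : ℝ) (a w : E) : ℝ := gauge (ball (-a) r) (w - a)

/-- The projection from `a` onto the sphere of radius `r` about the origin. -/
def radialProj (r : ℝ) (a w : E) : E := a + (radialFactor r a w)⁻¹ • (w - a)

lemma radialFactor_eq_one_iff (ha : ‖a‖ < r) : radialFactor r a w = 1 ↔ ‖w‖ = r := by
  have hr : r ≠ 0 := ((norm_nonneg a).trans_lt ha).ne'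
  rw [radialFactor, gauge_eq_one_iff_mem_frontier (convex_ball _ _) (ball_neg_mem_nhds_zero ha),
    frontier_ball _ hr, mem_sphere_neg_sub_iff]

lemma one_lt_radialFactor (ha : ‖a‖ < r) (hw : r < ‖w‖) : 1 < radialFactor r a w := by
  have hr : r ≠ 0 := ((norm_nonneg a).trans_lt ha).ne'
  rw [← not_le, radialFactor,
    gauge_le_one_iff_mem_closure (convex_ball _ _) (ball_neg_mem_nhds_zero ha), closure_ball _ hr]
  simpa [dist_eq_norm] using hw

lemma one_le_radialFactor (ha : ‖a‖ < r) (hw : r ≤ ‖w‖) : 1 ≤ radialFactor r a w :=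
  hw.eq_or_lt.elim (fun h ↦ ((radialFactor_eq_one_iff ha).2 h.symm).ge)
    fun h ↦ (one_lt_radialFactor ha h).le

lemma radialProj_of_norm_eq (ha : ‖a‖ < r) (hw : ‖w‖ = r) : radialProj r a w = w := by
  rw [radialProj, (radialFactor_eq_one_iff ha).2 hw, inv_one, one_smul, add_sub_cancel]

lemma norm_radialProj (ha : ‖a‖ < r) (hw : r ≤ ‖w‖) : ‖radialProj r a w‖ = r := by
  have hpos : 0 < radialFactor r a w := one_pos.trans_le (one_le_radialFactor ha hw)
  rw [← radialFactor_eq_one_iff ha, radialFactor, radialProj, add_sub_cancel_left,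
    gauge_smul_of_nonneg (inv_nonneg.2 hpos.le), ← radialFactor, smul_eq_mul,
    inv_mul_cancel₀ hpos.ne']

lemma continuousOn_radialProj (ha : ‖a‖ < r) : ContinuousOn (radialProj r a) {w | r ≤ ‖w‖} := by
  have hcont : Continuous (radialFactor r a) :=
    (continuous_gauge (convex_ball _ _) (ball_neg_mem_nhds_zero ha)).comp (by fun_prop)
  exact continuousOn_const.add ((hcont.continuousOn.inv₀ fun w hw ↦
    (one_pos.trans_le (one_le_radialFactor ha hw)).ne').smul (by fun_prop))

lemma radialProj_mem_segment (ha : ‖a‖ < r) (hw : r ≤ ‖w‖) : radialProj r a w ∈ segment ℝ a w := by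
  have h := one_le_radialFactor ha hw
  rw [segment_eq_image']
  exact ⟨_, ⟨inv_nonneg.2 (zero_le_one.trans h), inv_le_one_of_one_le₀ h⟩, rfl⟩

lemma radialProj_mem_openSegment (ha : ‖a‖ < r) (hw : r < ‖w‖) :
    radialProj r a w ∈ openSegment ℝ a w := by
  have h := one_lt_radialFactor ha hw
  rw [openSegment_eq_image']
  exact ⟨_, ⟨inv_pos.2 (one_pos.trans h), inv_lt_one_of_one_lt₀ h⟩, rfl⟩

lemma eq_or_mem_openSegment_of_radialProj_eq (ha : ‖a‖ < r) (hw : r ≤ ‖w‖) (hw' : r ≤ ‖w'‖)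
    (h : radialProj r a w = radialProj r a w') :
    w = w' ∨ w ∈ openSegment ℝ a w' ∨ w' ∈ openSegment ℝ a w := by
  have hpos : 0 < radialFactor r a w := one_pos.trans_le (one_le_radialFactor ha hw)
  have hpos' : 0 < radialFactor r a w' := one_pos.trans_le (one_le_radialFactor ha hw')
  have hray : (radialFactor r a w)⁻¹ • (w - a) = (radialFactor r a w')⁻¹ • (w' - a) :=
    add_left_cancel h
  have mem_of_lt {x y : E} (hx : 0 < radialFactor r a x)
      (hxy : radialFactor r a x < radialFactor r a y)
      (hray : (radialFactor r a x)⁻¹ • (x - a) = (radialFactor r a y)⁻¹ • (y - a)) :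
      x ∈ openSegment ℝ a y := by
    rw [openSegment_eq_image']
    refine ⟨radialFactor r a x / radialFactor r a y,
      ⟨div_pos hx (hx.trans hxy), (div_lt_one (hx.trans hxy)).2 hxy⟩, ?_⟩
    change a + _ • (y - a) = x
    rw [div_eq_mul_inv, mul_smul, ← hray, smul_inv_smul₀ hx.ne', add_sub_cancel]
  obtain hlt | heq | hgt := lt_trichotomy (radialFactor r a w) (radialFactor r a w')
  · exact Or.inr (Or.inl (mem_of_lt hpos hlt hray))
  · rw [heq] at hray
    exact Or.inl (sub_left_injective (smul_right_injective E (inv_ne_zero hpos'.ne') hray))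
  · exact Or.inr (Or.inr (mem_of_lt hpos' hgt hray.symm))

end RadialProjection

section StraddlingFamilies

variable {E ι : Type*} [NormedAddCommGroup E] [NormedSpace ℝ E] {V : ι → Set E} {r : ℝ}

/-- A null family of convex open sets with disjoint closures, each of which straddles the sphere of
radius `r` about the origin. -/
structure IsStraddling (V : ι → Set E) (r : ℝ) : Prop where
  pos : 0 < r
  isOpen : ∀ i, IsOpen (V i)
  convex : ∀ i, Convex ℝ (V i)
  nonempty_inter_sphere : ∀ i, (V i ∩ sphere 0 r).Nonempty
  disjoint_closure : Pairwise fun i j ↦ Disjoint (closure (V i)) (closure (V j))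
  isBounded : ∀ i, Bornology.IsBounded (V i)
  tendsto_diam : Tendsto (fun i ↦ diam (V i)) cofinite (𝓝 0)

/-- The ball of radius `r` about the origin, enlarged by the sets `V i`. -/
def swollenBall (V : ι → Set E) (r : ℝ) : Set E := ball 0 r ∪ ⋃ i, V i

open Classical in
/-- The map pushing each `closure (V i)` radially from `a i` onto the sphere of radius `r`, and
projecting from the origin the points of no `closure (V i)`. -/
def collapse (V : ι → Set E) (r : ℝ) (a : ι → E) (w : E) : E :=
  radialProj r (if h : ∃ i, w ∈ closure (V i) then a h.choose else 0) w

namespace IsStraddling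

variable {a : ι → E} {i : ι} {w : E} (h : IsStraddling V r)
include h

lemma isOpen_swollenBall : IsOpen (swollenBall V r) :=
  isOpen_ball.union (isOpen_iUnion h.isOpen)

lemma inter_ball_nonempty (i : ι) : (V i ∩ ball 0 r).Nonempty := by
  obtain ⟨x, hxV, hx⟩ := h.nonempty_inter_sphere i
  rw [inter_comm, ← closure_inter_open_nonempty_iff (h.isOpen i), closure_ball _ h.pos.ne']
  exact ⟨x, sphere_subset_closedBall hx, hxV⟩

lemma finite_le_diam {ε : ℝ} (hε : 0 < ε) : {i | ε ≤ diam (V i)}.Finite := by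
  simpa only [not_lt] using eventually_cofinite.1 (h.tendsto_diam.eventually_lt_const hε)

lemma norm_sub_le_diam (hw : w ∈ V i) : ‖w‖ - r ≤ diam (V i) := by
  obtain ⟨x, hxV, hx⟩ := h.nonempty_inter_sphere i
  rw [← mem_sphere_zero_iff_norm.1 hx]
  exact (norm_sub_norm_le w x).trans
    ((dist_eq_norm w x).ge.trans (dist_le_diam_of_mem (h.isBounded i) hw hxV))

lemma openSegment_subset {x : E} (hx : x ∈ V i) (hw : w ∈ closure (V i)) :
    openSegment ℝ x w ⊆ V i := by
  have hint := (h.isOpen i).interior_eq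
  simpa only [hint] using
    (h.convex i).openSegment_interior_closure_subset_interior (hint.symm ▸ hx) hw

lemma exists_finite_eventually_mem_closure (hw : r < ‖w‖) :
    ∃ F : Set ι, F.Finite ∧
      ∀ᶠ w' in 𝓝 w, w' ∈ closure (swollenBall V r) → w' ∈ ⋃ i ∈ F, closure (V i) := by
  obtain ⟨ρ, hrρ, hρ⟩ := exists_between hw
  obtain ⟨F, hFfin, hF⟩ : ∃ F : Set ι, F.Finite ∧ ∀ i, ρ - r ≤ diam (V i) → i ∈ F :=
    ⟨_, h.finite_le_diam (sub_pos.2 hrρ), fun _ hi ↦ hi⟩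
  refine ⟨F, hFfin, ?_⟩
  have hopen : IsOpen {w : E | ρ < ‖w‖} := isOpen_lt continuous_const continuous_norm
  filter_upwards [hopen.mem_nhds hρ] with w' hw' hcl
  rw [← hFfin.closure_biUnion]
  refine closure_mono ?_ (hopen.inter_closure ⟨hw', hcl⟩)
  rintro x ⟨hx, hxr | hxV⟩
  · exact absurd ((mem_ball_zero_iff.1 hxr).trans hrρ) hx.not_gt
  · obtain ⟨i, hi⟩ := mem_iUnion.1 hxV
    exact mem_biUnion (hF i ((sub_le_sub_right (le_of_lt hx) r).trans (h.norm_sub_le_diam hi))) hi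

lemma exists_mem_closure (hwr : r < ‖w‖) (hw : w ∈ closure (swollenBall V r)) :
    ∃ i, w ∈ closure (V i) := by
  obtain ⟨F, -, hF⟩ := h.exists_finite_eventually_mem_closure hwr
  obtain ⟨i, -, hi⟩ := mem_iUnion₂.1 (hF.self_of_nhds hw)
  exact ⟨i, hi⟩

lemma eventually_mem_closure (hwr : r < ‖w‖) (hw : w ∈ closure (V i)) :
    ∀ᶠ w' in 𝓝 w, w' ∈ closure (swollenBall V r) → w' ∈ closure (V i) := by
  obtain ⟨F, hFfin, hF⟩ := h.exists_finite_eventually_mem_closure hwr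
  have hclosed : IsClosed (⋃ j ∈ F \ {i}, closure (V j)) :=
    (hFfin.subset sdiff_subset).isClosed_biUnion fun _ _ ↦ isClosed_closure
  have hwF : w ∉ ⋃ j ∈ F \ {i}, closure (V j) := fun hmem ↦ by
    obtain ⟨j, hj, hwj⟩ := mem_iUnion₂.1 hmem
    exact disjoint_left.1 (h.disjoint_closure hj.2) hwj hw
  filter_upwards [hF, hclosed.isOpen_compl.mem_nhds hwF] with w' hw' hw'F hcl
  obtain ⟨j, hj, hwj⟩ := mem_iUnion₂.1 (hw' hcl)
  obtain rfl | hji := eq_or_ne j i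
  · exact hwj
  · exact (hw'F (mem_biUnion ⟨hj, hji⟩ hwj)).elim

lemma le_norm_of_mem_frontier (hw : w ∈ frontier (swollenBall V r)) : r ≤ ‖w‖ :=
  not_lt.1 fun hlt ↦ h.isOpen_swollenBall.inter_frontier_eq.le
    ⟨Or.inl (mem_ball_zero_iff.2 hlt), hw⟩

lemma notMem_of_mem_frontier (hw : w ∈ frontier (swollenBall V r)) : w ∉ V i := fun hi ↦
  h.isOpen_swollenBall.inter_frontier_eq.le ⟨Or.inr (mem_iUnion_of_mem i hi), hw⟩

lemma collapse_of_mem_closure (a : ι → E) (hw : w ∈ closure (V i)) :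
    collapse V r a w = radialProj r (a i) w := by
  have hex : ∃ i, w ∈ closure (V i) := ⟨i, hw⟩
  have hi : hex.choose = i := by
    by_contra hne
    exact disjoint_left.1 (h.disjoint_closure hne) hex.choose_spec hw
  rw [collapse, dif_pos hex, hi]

lemma exists_collapse_eq_radialProj (ha : ∀ i, ‖a i‖ < r) (w : E) :
    ∃ b, ‖b‖ < r ∧ collapse V r a w = radialProj r b w := by
  refine ⟨_, ?_, rfl⟩
  split_ifs
  · exact ha _
  · simpa using h.pos

lemma collapse_of_norm_eq (ha : ∀ i, ‖a i‖ < r) (hw : ‖w‖ = r) : collapse V r a w = w := by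
  obtain ⟨b, hb, hcol⟩ := h.exists_collapse_eq_radialProj ha w
  rw [hcol, radialProj_of_norm_eq hb hw]

lemma norm_collapse (ha : ∀ i, ‖a i‖ < r) (hw : r ≤ ‖w‖) : ‖collapse V r a w‖ = r := by
  obtain ⟨b, hb, hcol⟩ := h.exists_collapse_eq_radialProj ha w
  rw [hcol, norm_radialProj hb hw]

lemma dist_collapse_le_diam (ha : ∀ i, a i ∈ V i ∩ ball 0 r) (hwr : r ≤ ‖w‖)
    (hw : w ∈ closure (V i)) : dist (collapse V r a w) w ≤ diam (V i) := by
  have hai : ‖a i‖ < r := mem_ball_zero_iff.1 (ha i).2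
  have hmem : collapse V r a w ∈ closure (V i) := by
    rw [h.collapse_of_mem_closure a hw]
    exact (h.convex i).closure.segment_subset (subset_closure (ha i).1) hw
      (radialProj_mem_segment hai hwr)
  rw [← Metric.diam_closure]
  exact dist_le_diam_of_mem (h.isBounded i).closure hmem hw

lemma collapse_mem (ha : ∀ i, a i ∈ V i ∩ ball 0 r) (hwr : r < ‖w‖) (hw : w ∈ closure (V i)) :
    collapse V r a w ∈ V i := by
  rw [h.collapse_of_mem_closure a hw]
  exact h.openSegment_subset (ha i).1 hw
    (radialProj_mem_openSegment (mem_ball_zero_iff.1 (ha i).2) hwr)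

lemma continuousWithinAt_collapse_of_lt (ha : ∀ i, ‖a i‖ < r) (hwr : r < ‖w‖)
    (hw : w ∈ closure (swollenBall V r)) :
    ContinuousWithinAt (collapse V r a) (closure (swollenBall V r)) w := by
  obtain ⟨i, hi⟩ := h.exists_mem_closure hwr hw
  have heq : collapse V r a =ᶠ[𝓝[closure (swollenBall V r)] w] radialProj r (a i) := by
    filter_upwards [eventually_nhdsWithin_of_eventually_nhds (h.eventually_mem_closure hwr hi),
      self_mem_nhdsWithin] with w' hw' hcl using h.collapse_of_mem_closure a (hw' hcl)
  have hnhds : {w : E | r ≤ ‖w‖} ∈ 𝓝 w := continuous_norm.continuousAt.eventually_const_le hwr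
  exact (((continuousOn_radialProj (ha i)).continuousAt
    hnhds).continuousWithinAt).congr_of_eventuallyEq heq (h.collapse_of_mem_closure a hi)

lemma continuousWithinAt_collapse_of_norm_eq (ha : ∀ i, a i ∈ V i ∩ ball 0 r) (hw : ‖w‖ = r) :
    ContinuousWithinAt (collapse V r a) (closure (swollenBall V r) ∩ {w | r ≤ ‖w‖}) w := by
  have har (i : ι) : ‖a i‖ < r := mem_ball_zero_iff.1 (ha i).2
  rw [Metric.continuousWithinAt_iff', h.collapse_of_norm_eq har hw]
  intro ε hε
  have hfin := h.finite_le_diam (half_pos hε)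
  have hlarge : ∀ᶠ w' in 𝓝[closure (swollenBall V r) ∩ {w | r ≤ ‖w‖}] w,
      ∀ i ∈ {i | ε / 2 ≤ diam (V i)}, dist (radialProj r (a i) w') w < ε := by
    refine (eventually_all_finite hfin).2 fun i _ ↦ ?_
    have hcont := ((continuousOn_radialProj (har i)) w hw.ge).mono
      (inter_subset_right (s := closure (swollenBall V r)))
    rw [Metric.continuousWithinAt_iff', radialProj_of_norm_eq (har i) hw] at hcont
    exact hcont ε hε
  filter_upwards [hlarge, self_mem_nhdsWithin,
    mem_nhdsWithin_of_mem_nhds (ball_mem_nhds w (half_pos hε))] with w' hlarge ⟨hcl, hr⟩ hdist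
  obtain hr | hr : r = ‖w'‖ ∨ r < ‖w'‖ := hr.eq_or_lt
  · rw [h.collapse_of_norm_eq har hr.symm]
    exact (mem_ball.1 hdist).trans (half_lt_self hε)
  · obtain ⟨i, hi⟩ := h.exists_mem_closure hr hcl
    by_cases hdiam : ε / 2 ≤ diam (V i)
    · rw [h.collapse_of_mem_closure a hi]
      exact hlarge i hdiam
    · calc dist (collapse V r a w') w ≤ dist (collapse V r a w') w' + dist w' w :=
            dist_triangle _ _ _
        _ < ε / 2 + ε / 2 := add_lt_add
            ((h.dist_collapse_le_diam ha hr.le hi).trans_lt (not_le.1 hdiam)) hdist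
        _ = ε := add_halves ε

lemma continuousOn_collapse (ha : ∀ i, a i ∈ V i ∩ ball 0 r) :
    ContinuousOn (collapse V r a) (frontier (swollenBall V r)) := fun w hw ↦ by
  have hwcl := frontier_subset_closure hw
  obtain hr | hr := (h.le_norm_of_mem_frontier hw).eq_or_lt
  · exact (h.continuousWithinAt_collapse_of_norm_eq ha hr.symm).mono fun x hx ↦
      ⟨frontier_subset_closure hx, h.le_norm_of_mem_frontier hx⟩
  · exact (h.continuousWithinAt_collapse_of_lt (fun i ↦ mem_ball_zero_iff.1 (ha i).2) hr
      hwcl).mono frontier_subset_closure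

lemma injOn_collapse (ha : ∀ i, a i ∈ V i ∩ ball 0 r) :
    InjOn (collapse V r a) (frontier (swollenBall V r)) := by
  have har (i : ι) : ‖a i‖ < r := mem_ball_zero_iff.1 (ha i).2
  intro w hw w' hw' hww'
  have mem_of_lt {w : E} (hw : w ∈ frontier (swollenBall V r)) (hr : r < ‖w‖) :
      ∃ i, w ∈ closure (V i) ∧ collapse V r a w ∈ V i :=
    let ⟨i, hi⟩ := h.exists_mem_closure hr (frontier_subset_closure hw)
    ⟨i, hi, h.collapse_mem ha hr hi⟩
  obtain hr | hr := (h.le_norm_of_mem_frontier hw).eq_or_lt <;>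
    obtain hr' | hr' := (h.le_norm_of_mem_frontier hw').eq_or_lt
  · rwa [h.collapse_of_norm_eq har hr.symm, h.collapse_of_norm_eq har hr'.symm] at hww'
  · obtain ⟨i, -, hi⟩ := mem_of_lt hw' hr'
    rw [← hww', h.collapse_of_norm_eq har hr.symm] at hi
    exact (h.notMem_of_mem_frontier hw hi).elim
  · obtain ⟨i, -, hi⟩ := mem_of_lt hw hr
    rw [hww', h.collapse_of_norm_eq har hr'.symm] at hi
    exact (h.notMem_of_mem_frontier hw' hi).elim
  · obtain ⟨i, hwi, hi⟩ := mem_of_lt hw hr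
    obtain ⟨j, hwj, hj⟩ := mem_of_lt hw' hr'
    obtain rfl : i = j := by
      by_contra hij
      exact disjoint_left.1 (h.disjoint_closure hij) (subset_closure hi)
        (subset_closure (hww' ▸ hj))
    rw [h.collapse_of_mem_closure a hwi, h.collapse_of_mem_closure a hwj] at hww'
    obtain heq | hseg | hseg := eq_or_mem_openSegment_of_radialProj_eq (har i) hr.le hr'.le hww'
    · exact heq
    · exact (h.notMem_of_mem_frontier hw (h.openSegment_subset (ha i).1 hwj hseg)).elim
    · exact (h.notMem_of_mem_frontier hw' (h.openSegment_subset (ha i).1 hwi hseg)).elim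

/-- This replaces the fact that the swollen ball is a Jordan domain, which needs Schoenflies. -/
theorem embedsInUnitSphere_frontier : EmbedsInUnitSphere E (frontier (swollenBall V r)) := by
  choose a ha using h.inter_ball_nonempty
  have har (i : ι) : ‖a i‖ < r := mem_ball_zero_iff.1 (ha i).2
  refine ⟨fun w ↦ r⁻¹ • collapse V r a w, (h.continuousOn_collapse ha).const_smul _,
    (smul_right_injective E (inv_ne_zero h.pos.ne')).comp_injOn (h.injOn_collapse ha),
    fun w hw ↦ ?_⟩
  rw [mem_sphere_zero_iff_norm, norm_smul, h.norm_collapse har (h.le_norm_of_mem_frontier hw),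
    norm_inv, Real.norm_of_nonneg h.pos.le, inv_mul_cancel₀ h.pos.ne']

omit h in
lemma disjoint_frontier_swollenBall {κ : Type*} {V : κ → Set E}
    (hstr : IsStraddling (fun i : {i | (V i ∩ sphere 0 r).Nonempty} ↦ V i) r)
    (hopen : ∀ i, IsOpen (V i)) (hdisj : Pairwise fun i j ↦ Disjoint (V i) (V j))
    (hconn : ∀ i, (V i ∩ ball 0 r).Nonempty → IsPreconnected (V i)) (i : κ) :
    Disjoint (V i)
      (frontier (swollenBall (fun i : {i | (V i ∩ sphere 0 r).Nonempty} ↦ V i) r)) := by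
  by_cases hi : (V i ∩ sphere 0 r).Nonempty
  · exact disjoint_right.2 fun w hw ↦ hstr.notMem_of_mem_frontier (i := ⟨i, hi⟩) hw
  obtain hout | hin := (V i ∩ ball 0 r).eq_empty_or_nonempty
  · refine ((disjoint_union_right.2 ⟨disjoint_iff_inter_eq_empty.2 hout,
      disjoint_iUnion_right.2 fun j ↦ hdisj ?_⟩).closure_right (hopen i)).mono_right
      frontier_subset_closure
    rintro rfl
    exact hi j.2
  · have hsub : V i ⊆ ball 0 r := fun w hw ↦ mem_ball_zero_iff.2 <|
      (hconn i hin).gt_of_ne continuous_norm.continuousOn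
        (fun x hx hxr ↦ hi ⟨x, hx, mem_sphere_zero_iff_norm.2 hxr⟩)
        (hin.imp fun x hx ↦ ⟨hx.1, mem_ball_zero_iff.1 hx.2⟩) hw
    exact (disjoint_iff_inter_eq_empty.2 hstr.isOpen_swollenBall.inter_frontier_eq).mono_left
      (hsub.trans subset_union_left)

end IsStraddling

end StraddlingFamilies

section NullFamilies

lemma tendsto_diam_image_of_isCompact {ι X Y : Type*} [PseudoMetricSpace X] [PseudoMetricSpace Y]
    {f : X → Y} {K : Set X} (hK : IsCompact K) (hf : ContinuousOn f K) {U : ι → Set X}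
    (hU : ∀ i, U i ⊆ K) {l : Filter ι} (hdiam : Tendsto (fun i ↦ diam (U i)) l (𝓝 0)) :
    Tendsto (fun i ↦ diam (f '' U i)) l (𝓝 0) := by
  rw [Metric.tendsto_nhds]
  intro ε hε
  obtain ⟨δ, hδ, hfδ⟩ := Metric.uniformContinuousOn_iff.1
    (hK.uniformContinuousOn_of_continuous hf) (ε / 2) (half_pos hε)
  filter_upwards [hdiam.eventually_lt_const hδ] with i hi
  have hle : diam (f '' U i) ≤ ε / 2 := by
    refine diam_le_of_forall_dist_le (half_pos hε).le ?_
    rintro _ ⟨x, hx, rfl⟩ _ ⟨y, hy, rfl⟩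
    exact (hfδ x (hU i hx) y (hU i hy)
      ((dist_le_diam_of_mem (hK.isBounded.subset (hU i)) hx hy).trans_lt hi)).le
  rw [Real.dist_0_eq_abs, abs_of_nonneg diam_nonneg]
  exact hle.trans_lt (half_lt_self hε)

variable {X ι : Type*} [PseudoMetricSpace X] [CompactSpace X] {c : ι → X} {r : ι → ℝ}

lemma finite_setOf_le_radius
    (hdisj : Pairwise fun i j ↦ Disjoint (ball (c i) (r i)) (ball (c j) (r j)))
    {ε : ℝ} (hε : 0 < ε) : {i | ε ≤ r i}.Finite := by
  obtain ⟨t, ht, hcover⟩ :=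
    Metric.totallyBounded_iff.1 (isCompact_univ (X := X)).totallyBounded ε hε
  choose f hft hf using fun i ↦ mem_iUnion₂.1 (hcover (mem_univ (c i)))
  refine ht.of_injOn (fun i _ ↦ hft i) fun i hi j hj hij ↦ ?_
  have hmem {k : ι} (hk : ε ≤ r k) : f k ∈ ball (c k) (r k) :=
    ball_subset_ball hk (mem_ball_comm.1 (hf k))
  by_contra hne
  exact disjoint_left.1 (hdisj hne) (hmem hi) (hij ▸ hmem hj)

lemma tendsto_diam_ball
    (hdisj : Pairwise fun i j ↦ Disjoint (ball (c i) (r i)) (ball (c j) (r j))) :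
    Tendsto (fun i ↦ diam (ball (c i) (r i))) cofinite (𝓝 0) := by
  rw [Metric.tendsto_nhds]
  intro ε hε
  filter_upwards [(finite_setOf_le_radius hdisj (half_pos (half_pos hε))).compl_mem_cofinite]
    with i hi
  rw [Real.dist_0_eq_abs, abs_of_nonneg diam_nonneg]
  calc diam (ball (c i) (r i)) ≤ diam (ball (c i) (ε / 2 / 2)) :=
        diam_mono (ball_subset_ball (le_of_not_ge hi)) isBounded_ball
    _ ≤ 2 * (ε / 2 / 2) := diam_ball (half_pos (half_pos hε)).le
    _ < ε := by linarith

variable {p : X}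

lemma eventually_forall_radius_lt
    (hdisj : Pairwise fun i j ↦ Disjoint (ball (c i) (r i)) (ball (c j) (r j)))
    (hp : ∀ i, p ∉ closure (ball (c i) (r i))) {ε : ℝ} (hε : 0 < ε) :
    ∀ᶠ x in 𝓝 p, ∀ i, x ∈ ball (c i) (r i) → r i < ε := by
  have hfar : ∀ᶠ x in 𝓝 p, ∀ i ∈ {i | ε ≤ r i}, x ∉ closure (ball (c i) (r i)) :=
    (eventually_all_finite (finite_setOf_le_radius hdisj hε)).2 fun i _ ↦
      isClosed_closure.isOpen_compl.mem_nhds (hp i)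
  filter_upwards [hfar] with x hx i hxi
  exact not_le.1 fun hi ↦ hx i hi (subset_closure hxi)

lemma eventually_forall_ball_subset
    (hdisj : Pairwise fun i j ↦ Disjoint (ball (c i) (r i)) (ball (c j) (r j)))
    (hp : ∀ i, p ∉ closure (ball (c i) (r i))) {N : Set X} (hN : N ∈ 𝓝 p) :
    ∀ᶠ x in 𝓝 p, ∀ i, x ∈ ball (c i) (r i) → ball (c i) (r i) ⊆ N := by
  obtain ⟨δ, hδ, hδN⟩ := Metric.mem_nhds_iff.1 hN
  filter_upwards [ball_mem_nhds p (half_pos hδ),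
    eventually_forall_radius_lt hdisj hp (half_pos (half_pos hδ))] with x hxp hx i hxi
  refine Subset.trans (fun y hy ↦ mem_ball.2 ?_) hδN
  have hri := hx i hxi
  calc dist y p ≤ dist y (c i) + dist x (c i) + dist x p :=
        (dist_triangle y x p).trans (add_le_add_left (dist_triangle_right y x (c i)) _)
    _ < δ / 2 / 2 + δ / 2 / 2 + δ / 2 := add_lt_add (add_lt_add ((mem_ball.1 hy).trans hri)
        ((mem_ball.1 hxi).trans hri)) hxp
    _ = δ := by ring

end NullFamilies

section GnomonicChart

open NormedSpace
open scoped RealInnerProductSpace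

variable {E : Type*} [NormedAddCommGroup E] [InnerProductSpace ℝ E]

lemma mem_ball_sphere_iff_lt_inner {c y : sphere (0 : E) 1} {ρ : ℝ} (hρ : 0 < ρ) :
    y ∈ ball c ρ ↔ 1 - ρ ^ 2 / 2 < ⟪(c : E), y⟫ := by
  have hdist : dist y c ^ 2 = 2 - 2 * ⟪(c : E), y⟫ := by
    rw [Subtype.dist_eq, dist_eq_norm, norm_sub_sq_real, norm_eq_of_mem_sphere,
      norm_eq_of_mem_sphere, real_inner_comm]
    ring
  rw [mem_ball, ← sq_lt_sq₀ dist_nonneg hρ.le, hdist]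
  constructor <;> intro h <;> linarith

lemma convex_setOf_mul_norm_lt_inner {a : ℝ} (ha : 0 ≤ a) (c : E) :
    Convex ℝ {v : E | a * ‖v‖ < ⟪c, v⟫} := by
  have hconvex : ConvexOn ℝ univ fun v : E ↦ a * ‖v‖ - ⟪c, v⟫ :=
    ((convexOn_norm convex_univ).smul ha).sub ((innerₛₗ ℝ c).concaveOn convex_univ)
  simpa only [mem_univ, true_and, sub_neg] using hconvex.convex_lt 0

variable (p : sphere (0 : E) 1)

lemma inner_coe_add_coe_orthogonal (z : (ℝ ∙ (p : E))ᗮ) : ⟪(p : E), p + z⟫ = 1 := by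
  rw [inner_add_right, real_inner_self_eq_norm_sq, norm_eq_of_mem_sphere,
    Submodule.mem_orthogonal_singleton_iff_inner_right.1 z.2, one_pow, add_zero]

lemma coe_add_coe_orthogonal_ne_zero (z : (ℝ ∙ (p : E))ᗮ) : (p : E) + z ≠ 0 := fun h ↦ by
  simpa [h] using inner_coe_add_coe_orthogonal p z

lemma inner_normalize_coe_add (z : (ℝ ∙ (p : E))ᗮ) :
    ⟪(p : E), normalize ((p : E) + z)⟫ = ‖(p : E) + z‖⁻¹ := by
  rw [NormedSpace.normalize, real_inner_smul_right, inner_coe_add_coe_orthogonal, mul_one]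

lemma coe_add_orthogonalProjectionOnto {y : E} (hy : ⟪(p : E), y⟫ ≠ 0) :
    (p : E) + (ℝ ∙ (p : E))ᗮ.orthogonalProjectionOnto (⟪(p : E), y⟫⁻¹ • y) =
      ⟪(p : E), y⟫⁻¹ • y := by
  have hmem : ⟪(p : E), y⟫⁻¹ • y - p ∈ (ℝ ∙ (p : E))ᗮ := by
    rw [Submodule.mem_orthogonal_singleton_iff_inner_right, inner_sub_right, real_inner_smul_right,
      inv_mul_cancel₀ hy, real_inner_self_eq_norm_sq, norm_eq_of_mem_sphere, one_pow, sub_self]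
  have hproj := Submodule.orthogonalProjectionOnto_mem_subspace_eq_self (⟨_, hmem⟩ : (ℝ ∙ (p : E))ᗮ)
  rw [map_sub, Submodule.orthogonalProjectionOnto_orthogonalComplement_singleton_eq_zero,
    sub_zero] at hproj
  rw [hproj, add_sub_cancel]

/-- The central projection of the tangent plane at `p`, identified with the orthogonal complement
of `p`, onto the open hemisphere about `p`. -/
def gnomonicChart : OpenPartialHomeomorph (ℝ ∙ (p : E))ᗮ (sphere (0 : E) 1) where
  toFun z := ⟨normalize ((p : E) + z), mem_sphere_zero_iff_norm.2 <|
    norm_normalize_eq_one_iff.2 (coe_add_coe_orthogonal_ne_zero p z)⟩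
  invFun y := (ℝ ∙ (p : E))ᗮ.orthogonalProjectionOnto (⟪(p : E), y⟫⁻¹ • y)
  source := univ
  target := {y | 0 < ⟪(p : E), y⟫}
  map_source' z _ := by
    simpa only [mem_ofPred_eq, inner_normalize_coe_add] using
      inv_pos.2 (norm_pos_iff.2 (coe_add_coe_orthogonal_ne_zero p z))
  map_target' _ _ := mem_univ _
  left_inv' z _ := by
    simp only [inner_normalize_coe_add, inv_inv, norm_smul_normalize]
    simp
  right_inv' y hy := Subtype.ext <| by
    change normalize ((p : E) + _) = y
    rw [coe_add_orthogonalProjectionOnto p (ne_of_gt hy), normalize_smul_of_pos (inv_pos.2 hy),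
      normalize_eq_self_of_norm_eq_one (norm_eq_of_mem_sphere y)]
  open_source := isOpen_univ
  open_target := isOpen_lt continuous_const (by fun_prop)
  continuousOn_toFun := by
    have hcont : Continuous fun z : (ℝ ∙ (p : E))ᗮ ↦ (p : E) + z := by fun_prop
    exact ((hcont.norm.inv₀ fun z ↦ norm_ne_zero_iff.2
      (coe_add_coe_orthogonal_ne_zero p z)).smul hcont).subtype_mk _ |>.continuousOn
  continuousOn_invFun := by
    refine (ContinuousLinearMap.continuous _).comp_continuousOn (ContinuousOn.smul ?_ ?_)
    · exact ContinuousOn.inv₀ (by fun_prop) fun y hy ↦ ne_of_gt hy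
    · fun_prop

lemma coe_gnomonicChart_apply (z : (ℝ ∙ (p : E))ᗮ) :
    (gnomonicChart p z : E) = normalize ((p : E) + z) := rfl

lemma gnomonicChart_zero : gnomonicChart p 0 = p :=
  Subtype.ext <| by
    rw [coe_gnomonicChart_apply, ZeroMemClass.coe_zero, add_zero,
      normalize_eq_self_of_norm_eq_one (norm_eq_of_mem_sphere p)]

lemma convex_gnomonicChart_preimage_ball (c : sphere (0 : E) 1) {ρ : ℝ} (hρ : ρ ≤ 1) :
    Convex ℝ (gnomonicChart p ⁻¹' ball c ρ) := by
  obtain hρ0 | hρ0 := le_or_gt ρ 0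
  · simpa only [ball_eq_empty.2 hρ0, preimage_empty] using convex_empty
  have hpre : gnomonicChart p ⁻¹' ball c ρ = (ℝ ∙ (p : E))ᗮ.subtype ⁻¹'
      ((fun v ↦ (p : E) + v) ⁻¹' {v | (1 - ρ ^ 2 / 2) * ‖v‖ < ⟪(c : E), v⟫}) := by
    ext z
    have hz : 0 < ‖(p : E) + z‖ := norm_pos_iff.2 (coe_add_coe_orthogonal_ne_zero p z)
    rw [mem_preimage, mem_ball_sphere_iff_lt_inner hρ0, coe_gnomonicChart_apply,
      NormedSpace.normalize, real_inner_smul_right, inv_mul_eq_div, lt_div_iff₀ hz]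
    rfl
  rw [hpre]
  have hcone := convex_setOf_mul_norm_lt_inner (a := 1 - ρ ^ 2 / 2) (by nlinarith) (c : E)
  exact (hcone.translate_preimage_right _).linear_preimage _

end GnomonicChart

section JordanNeighborhoods

lemma frontier_image_subset_image_frontier {X Y : Type*} [TopologicalSpace X] [TopologicalSpace Y]
    [T2Space Y] {f : X → Y} (hf : Continuous f) (hf' : IsOpenMap f) {W : Set X}
    (hW : IsCompact (closure W)) : frontier (f '' W) ⊆ f '' frontier W := by
  rintro _ ⟨hcl, hint⟩
  rw [← image_closure_of_isCompact hW hf.continuousOn] at hcl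
  obtain ⟨w, hw, rfl⟩ := hcl
  exact ⟨w, ⟨hw, fun hwint ↦ hint (hf'.image_interior_subset W ⟨w, hwint, rfl⟩)⟩, rfl⟩

lemma EmbedsInUnitSphere.image {F X Y : Type*} [NormedAddCommGroup F] [TopologicalSpace X]
    [TopologicalSpace Y] (e : OpenPartialHomeomorph X Y) {S : Set X} (hS : S ⊆ e.source)
    (h : EmbedsInUnitSphere F S) : EmbedsInUnitSphere F (e '' S) := by
  obtain ⟨π, hπ, hπinj, hπS⟩ := h
  have hleft : LeftInvOn e.symm e S := fun x hx ↦ e.left_inv (hS hx)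
  have hmaps : MapsTo e.symm (e '' S) S := hleft.mapsTo (surjOn_image e S)
  have htarget : e '' S ⊆ e.symm.source := (image_mono hS).trans e.image_source_eq_target.le
  exact ⟨π ∘ e.symm, hπ.comp (e.continuousOn_symm.mono htarget) hmaps,
    hπinj.comp (e.symm.injOn.mono htarget) hmaps, hπS.comp hmaps⟩

variable {F X ι : Type*} [NormedAddCommGroup F] [MetricSpace X] [CompactSpace X]
  {e : OpenPartialHomeomorph F X} (he : e.source = univ) {c : ι → X} {r : ι → ℝ}
include he

lemma exists_radius_forall_ball_subset
    (hdisj : Pairwise fun i j ↦ Disjoint (ball (c i) (r i)) (ball (c j) (r j)))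
    (h0 : ∀ i, e 0 ∉ closure (ball (c i) (r i))) {M : Set F} (hM : M ∈ 𝓝 0) :
    ∃ ρ > 0, closedBall 0 ρ ⊆ M ∧ ∀ i, (e ⁻¹' ball (c i) (r i) ∩ closedBall 0 ρ).Nonempty →
      r i < 1 ∧ ball (c i) (r i) ⊆ e '' M := by
  have h0e : (0 : F) ∈ e.source := he ▸ mem_univ 0
  have hev := (e.continuousAt h0e).eventually
    ((eventually_forall_radius_lt hdisj h0 one_pos).and
      (eventually_forall_ball_subset hdisj h0 (e.image_mem_nhds h0e hM)))
  obtain ⟨ρ, hρ, h⟩ := nhds_basis_closedBall.eventually_iff.1 (hev.and hM)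
  exact ⟨ρ, hρ, fun x hx ↦ (h hx).2, fun i ⟨x, hxi, hx⟩ ↦
    ⟨(h hx).1.1 i hxi, (h hx).1.2 i hxi⟩⟩

variable [NormedSpace ℝ F]

lemma isStraddling_preimage_ball
    (hdisj : Pairwise fun i j ↦ Disjoint (closure (ball (c i) (r i))) (closure (ball (c j) (r j))))
    (hconv : ∀ i, r i ≤ 1 → Convex ℝ (e ⁻¹' ball (c i) (r i))) {M : Set F} (hM : IsCompact M)
    {ρ : ℝ} (hρ : 0 < ρ) (hsmall : ∀ i, (e ⁻¹' ball (c i) (r i) ∩ sphere 0 ρ).Nonempty →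
      r i ≤ 1 ∧ ball (c i) (r i) ⊆ e '' M) :
    IsStraddling (fun i : {i | (e ⁻¹' ball (c i) (r i) ∩ sphere 0 ρ).Nonempty} ↦
      e ⁻¹' ball (c i) (r i)) ρ := by
  have hcont : Continuous e := continuousOn_univ.1 (he ▸ e.continuousOn)
  have hinj : Function.Injective e := injOn_univ.1 (he ▸ e.injOn)
  have htarget : e '' M ⊆ e.target := by
    rw [← e.image_source_eq_target, he]
    exact image_mono (subset_univ M)
  set S := {i | (e ⁻¹' ball (c i) (r i) ∩ sphere 0 ρ).Nonempty}
  have hsub (i : S) : ball (c i) (r i) ⊆ e '' M := (hsmall i i.2).2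
  refine ⟨hρ, fun i ↦ isOpen_ball.preimage hcont, fun i ↦ hconv i (hsmall i i.2).1, fun i ↦ i.2,
    fun i j hij ↦ ?_, fun i ↦ hM.isBounded.subset ?_, ?_⟩
  · exact ((hdisj (Subtype.coe_injective.ne hij)).preimage e).mono
      (hcont.closure_preimage_subset _) (hcont.closure_preimage_subset _)
  · exact (preimage_mono (hsub i)).trans (preimage_image_eq M hinj).le
  · have hdiam : Tendsto (fun i : S ↦ diam (ball (c i) (r i))) cofinite (𝓝 0) :=
      (tendsto_diam_ball fun i j hij ↦ (hdisj hij).mono subset_closure subset_closure).comp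
        Subtype.coe_injective.tendsto_cofinite
    refine (tendsto_diam_image_of_isCompact (hM.image hcont) (e.continuousOn_symm.mono htarget)
      hsub hdiam).congr fun i ↦ ?_
    rw [e.symm_image_eq_source_inter_preimage ((hsub i).trans htarget), he, univ_inter]

/-- The disks form a null family, so a small ball about `e 0` can be swollen by all the disks that
straddle its boundary without growing large. -/
theorem exists_isOpen_embedsInUnitSphere_frontier [ProperSpace F]
    (hdisj : Pairwise fun i j ↦ Disjoint (closure (ball (c i) (r i))) (closure (ball (c j) (r j))))
    (hconv : ∀ i, r i ≤ 1 → Convex ℝ (e ⁻¹' ball (c i) (r i)))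
    (h0 : ∀ i, e 0 ∉ closure (ball (c i) (r i))) {N : Set X} (hN : N ∈ 𝓝 (e 0)) :
    ∃ W, IsOpen W ∧ e 0 ∈ W ∧ W ⊆ N ∧ (∀ i, Disjoint (ball (c i) (r i)) (frontier W)) ∧
      EmbedsInUnitSphere F (frontier W) := by
  have hemb : Topology.IsOpenEmbedding e := e.isOpenEmbedding he
  have hdisj' : Pairwise fun i j ↦ Disjoint (ball (c i) (r i)) (ball (c j) (r j)) :=
    fun i j hij ↦ (hdisj hij).mono subset_closure subset_closure
  obtain ⟨η, hη, hηN⟩ := nhds_basis_closedBall.mem_iff.1 (hemb.continuous.continuousAt hN)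
  obtain ⟨ρ, hρ, hρη, hsmall⟩ := exists_radius_forall_ball_subset he hdisj' h0
    (closedBall_mem_nhds 0 hη)
  have hstr := isStraddling_preimage_ball he hdisj hconv (isCompact_closedBall 0 η) hρ
    fun i hi ↦ (hsmall i (hi.mono (inter_subset_inter_right _ sphere_subset_closedBall))).imp_left
      le_of_lt
  set V := fun i : {i | (e ⁻¹' ball (c i) (r i) ∩ sphere 0 ρ).Nonempty} ↦ e ⁻¹' ball (c i) (r i)
  have hsub : swollenBall V ρ ⊆ closedBall 0 η := by
    refine union_subset (ball_subset_closedBall.trans hρη) (iUnion_subset fun i ↦ ?_)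
    have hi := hsmall i (i.2.mono (inter_subset_inter_right _ sphere_subset_closedBall))
    exact (preimage_mono hi.2).trans (preimage_image_eq _ hemb.injective).le
  have hfr : frontier (e '' swollenBall V ρ) ⊆ e '' frontier (swollenBall V ρ) :=
    frontier_image_subset_image_frontier hemb.continuous hemb.isOpenMap
      ((isCompact_closedBall 0 η).closure_of_subset hsub)
  refine ⟨e '' swollenBall V ρ, hemb.isOpenMap _ hstr.isOpen_swollenBall,
    mem_image_of_mem e (Or.inl (mem_ball_self hρ)), image_subset_iff.2 (hsub.trans hηN),
    fun i ↦ ?_, (hstr.embedsInUnitSphere_frontier.image e (he ▸ subset_univ _)).mono hfr⟩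
  have hdisjfr := hstr.disjoint_frontier_swollenBall (V := fun i ↦ e ⁻¹' ball (c i) (r i))
    (fun i ↦ isOpen_ball.preimage hemb.continuous) (fun i j hij ↦ (hdisj' hij).preimage e)
    (fun i hi ↦ (hconv i (hsmall i (hi.mono
      (inter_subset_inter_right _ ball_subset_closedBall))).1.le).isPreconnected) i
  refine disjoint_left.2 fun y hyi hy ↦ ?_
  obtain ⟨x, hx, rfl⟩ := hfr hy
  exact disjoint_left.1 hdisjfr hyi hx

end JordanNeighborhoods

section Branching

variable {ι E : Type*} [NormedAddCommGroup E] [InnerProductSpace ℝ E] {c : ι → sphere (0 : E) 1}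
  {r : ι → ℝ}

theorem exists_isOpen_embedsInUnitSphere_frontier_of_finrank_eq_three
    (hE : Module.finrank ℝ E = 3)
    (hdisj : Pairwise fun i j ↦ Disjoint (closure (ball (c i) (r i))) (closure (ball (c j) (r j))))
    {p : sphere (0 : E) 1} (hp : ∀ i, p ∉ closure (ball (c i) (r i))) {N : Set (sphere (0 : E) 1)}
    (hN : N ∈ 𝓝 p) :
    ∃ W, IsOpen W ∧ p ∈ W ∧ W ⊆ N ∧ (∀ i, Disjoint (ball (c i) (r i)) (frontier W)) ∧
      EmbedsInUnitSphere ℂ (frontier W) := by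
  have : FiniteDimensional ℝ E := .of_finrank_pos (hE ▸ three_pos)
  have : Fact (Module.finrank ℝ E = 2 + 1) := ⟨hE⟩
  have hchart : gnomonicChart p 0 = p := gnomonicChart_zero p
  obtain ⟨W, hWo, hpW, hWN, hWdisj, hW⟩ := exists_isOpen_embedsInUnitSphere_frontier
    (e := gnomonicChart p) rfl hdisj (fun i ↦ convex_gnomonicChart_preimage_ball p (c i))
    (hchart.symm ▸ hp) (hchart.symm ▸ hN)
  let e : (ℝ ∙ (p : E))ᗮ ≃ₗᵢ[ℝ] ℂ := (OrthonormalBasis.fromOrthogonalSpanSingleton 2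
    (ne_zero_of_mem_unit_sphere p)).equiv Complex.orthonormalBasisOneI (Equiv.refl _)
  exact ⟨W, hWo, hchart ▸ hpW, hWN, hWdisj, hW.of_linearIsometryEquiv e⟩

/-- A disk `j` cannot carry a further arc `l` at its centre: the frontier of a small neighbourhood
of the image of the centre is covered by the image of the disk, so the arc cannot cross it. -/
theorem mem_iUnion_closure_ball_of_branching (hE : Module.finrank ℝ E = 3)
    (hdisj : Pairwise fun i j ↦ Disjoint (closure (ball (c i) (r i))) (closure (ball (c j) (r j))))
    {Y : Type*} [TopologicalSpace Y] {D : Set Y} {g : Y → sphere (0 : E) 1} (hg : ContinuousOn g D)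
    (hinj : InjOn g (D ∩ g ⁻¹' (⋃ i, ball (c i) (r i))ᶜ)) {j : ℂ → Y} {R : ℝ} (hR : 0 < R)
    (hj : ContinuousOn j (closedBall 0 R)) (hjinj : InjOn j (closedBall 0 R))
    (hjD : MapsTo j (closedBall 0 R) D) {l : ℝ → Y} (hl : ContinuousOn l (Icc 0 1))
    (hlD : MapsTo l (Icc 0 1) D) (hl0 : l 0 = j 0)
    (hlj : ∀ t ∈ Ioc (0 : ℝ) 1, l t ∉ j '' closedBall 0 R) :
    g (j 0) ∈ ⋃ i, closure (ball (c i) (r i)) := by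
  by_contra hp
  have : FiniteDimensional ℝ E := .of_finrank_pos (hE ▸ three_pos)
  have h0 : (0 : ℂ) ∈ closedBall 0 R := mem_closedBall_self hR.le
  have hpU : g (j 0) ∉ ⋃ i, ball (c i) (r i) := fun h ↦ hp (iUnion_mono (fun _ ↦ subset_closure) h)
  have eq_of_eq {x y : Y} (hx : x ∈ D) (hy : y ∈ D) (hyU : g y ∉ ⋃ i, ball (c i) (r i))
      (hxy : g x = g y) : x = y := hinj ⟨hx, by rwa [mem_preimage, hxy]⟩ ⟨hy, hyU⟩ hxy
  have hj' : ContinuousOn j (sphere 0 R) := hj.mono sphere_subset_closedBall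
  set S : Set Y := insert (l 1) (j '' sphere 0 R)
  have hS : IsCompact S := ((isCompact_sphere 0 R).image_of_continuousOn hj').insert _
  have hSD : S ⊆ D := insert_subset (hlD (right_mem_Icc.2 zero_le_one))
    (image_subset_iff.2 (hjD.mono_left sphere_subset_closedBall))
  have h0S : j 0 ∉ S := by
    rintro (h | ⟨z, hz, hz0⟩)
    · exact hlj 1 (right_mem_Ioc.2 one_pos) ⟨0, h0, h⟩
    · rw [hjinj (sphere_subset_closedBall hz) h0 hz0, mem_sphere, dist_self] at hz
      exact hR.ne hz
  have hN : (g '' S)ᶜ ∈ 𝓝 (g (j 0)) := by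
    refine (hS.image_of_continuousOn (hg.mono hSD)).isClosed.isOpen_compl.mem_nhds ?_
    rintro ⟨x, hx, hx0⟩
    exact h0S (eq_of_eq (hSD hx) (hjD h0) hpU hx0 ▸ hx)
  obtain ⟨W, hWo, hpW, hWN, hWdisj, hW⟩ :=
    exists_isOpen_embedsInUnitSphere_frontier_of_finrank_eq_three hE hdisj
      (fun i hi ↦ hp (mem_iUnion_of_mem i hi)) hN
  have hfr {x : sphere (0 : E) 1} (hx : x ∈ frontier W) : x ∉ ⋃ i, ball (c i) (r i) := fun h ↦
    let ⟨i, hi⟩ := mem_iUnion.1 h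
    disjoint_left.1 (hWdisj i) hi hx
  obtain ⟨t, ht, z, hz, hzt, htW⟩ := exists_mem_Ioc_eq_of_frontier_embedsInUnitSphere hR
    (hg.comp hj hjD) hWo hpW
    (fun z hz hzW ↦ hWN hzW (mem_image_of_mem g (Or.inr (mem_image_of_mem j hz))))
    (fun z hz w hw hzw ↦ hjinj hz.1 hw.1 (eq_of_eq (hjD hz.1) (hjD hw.1) (hfr hw.2) hzw)) hW
    (hg.comp hl hlD) (show g (l 0) ∈ W from hl0 ▸ hpW)
    (fun h ↦ hWN h (mem_image_of_mem g (Or.inl rfl)))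
  exact hlj t ht ⟨z, hz, eq_of_eq (hjD hz) (hlD (Ioc_subset_Icc_self ht)) (hfr htW) hzt⟩

end Branching

section Tripod

/-- The line formed by the first two legs of the tripod, the first leg at positive parameters and
the second at negative ones. -/
def tripodLine (t : ℝ) : ℝ × ℝ := t⁺ • (1, 0) + t⁻ • (-(1 / 2), √3 / 2)

/-- The ray spanned by the third leg of the tripod. -/
def tripodRay (t : ℝ) : ℝ × ℝ := t • (-(1 / 2), -(√3 / 2))

lemma smul_mem_segment_zero {F : Type*} [AddCommGroup F] [Module ℝ F] (v : F) {t : ℝ}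
    (ht : t ∈ Icc (0 : ℝ) 1) : t • v ∈ segment ℝ 0 v := by
  rw [segment_eq_image']
  exact ⟨t, ht, by simp⟩

lemma tripodLine_mem_tripod {t : ℝ} (ht : |t| ≤ 1) : tripodLine t ∈ tripod := by
  obtain h | h := le_total 0 t
  · rw [tripodLine, posPart_of_nonneg h, negPart_of_nonneg h, zero_smul, add_zero]
    exact Or.inl (Or.inl (smul_mem_segment_zero _ ⟨h, (le_abs_self t).trans ht⟩))
  · rw [tripodLine, posPart_of_nonpos h, negPart_of_nonpos h, zero_smul, zero_add]
    exact Or.inl (Or.inr (smul_mem_segment_zero _ ⟨neg_nonneg.2 h, (neg_le_abs t).trans ht⟩))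

lemma tripodRay_mem_tripod {t : ℝ} (ht : t ∈ Icc (0 : ℝ) 1) : tripodRay t ∈ tripod :=
  Or.inr (smul_mem_segment_zero _ ht)

lemma continuous_tripodLine : Continuous tripodLine :=
  (continuous_posPart.smul continuous_const).add (continuous_negPart.smul continuous_const)

lemma tripodLine_injective : Function.Injective tripodLine := fun t u h ↦ by
  obtain ⟨h₁, h₂⟩ : t⁺ + t⁻ * -(1 / 2) = u⁺ + u⁻ * -(1 / 2) ∧ t⁻ * (√3 / 2) = u⁻ * (√3 / 2) := by
    simpa [tripodLine] using h
  have hneg : t⁻ = u⁻ := mul_right_cancel₀ (by positivity) h₂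
  rw [← posPart_sub_negPart t, ← posPart_sub_negPart u]
  linarith

lemma tripodLine_ne_tripodRay {t u : ℝ} (hu : 0 < u) : tripodLine t ≠ tripodRay u := fun h ↦ by
  have hsnd : t⁻ * (√3 / 2) = u * -(√3 / 2) := by
    simpa [tripodLine, tripodRay] using congrArg Prod.snd h
  have ht : 0 ≤ t⁻ * (√3 / 2) := mul_nonneg (negPart_nonneg t) (by positivity)
  have hu' : 0 < u * (√3 / 2) := by positivity
  linarith

/-- The product of the first two legs of the tripod with an interval, centred at height `s`. -/
def tripodDisk (s : ℝ) (z : ℂ) : (ℝ × ℝ) × ℝ := (tripodLine z.re, s + z.im)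

lemma continuous_tripodDisk (s : ℝ) : Continuous (tripodDisk s) :=
  (continuous_tripodLine.comp Complex.continuous_re).prodMk (by fun_prop)

lemma tripodDisk_injective (s : ℝ) : Function.Injective (tripodDisk s) := fun _ _ h ↦
  Complex.ext (tripodLine_injective (congrArg Prod.fst h)) (add_left_cancel (congrArg Prod.snd h))

lemma tripodDisk_zero (s : ℝ) : tripodDisk s 0 = (0, s) := by
  simp [tripodDisk, tripodLine]

lemma mapsTo_tripodDisk {s : ℝ} (hs : s ∈ Icc (0 : ℝ) 1) :
    MapsTo (tripodDisk s) (closedBall 0 (min s (1 - s))) (tripod ×ˢ Icc 0 1) := fun z hz ↦ by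
  obtain ⟨hzs, hzs'⟩ := le_min_iff.1 (mem_closedBall_zero_iff.1 hz)
  obtain ⟨hlow, hhigh⟩ := abs_le.1 (Complex.abs_im_le_norm z)
  refine ⟨tripodLine_mem_tripod ((Complex.abs_re_le_norm z).trans (hzs.trans hs.2)), ?_, ?_⟩
  · change 0 ≤ s + z.im
    linarith
  · change s + z.im ≤ 1
    linarith

end Tripod

theorem no_branching_at_carpet_points_general {ι E : Type*} [NormedAddCommGroup E]
    [InnerProductSpace ℝ E] (hE : Module.finrank ℝ E = 3) {c : ι → sphere (0 : E) 1} {r : ι → ℝ}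
    (hdisj : Pairwise fun i j ↦
      Disjoint (closure (ball (c i) (r i))) (closure (ball (c j) (r j)))) :
    ¬ ∃ g : (ℝ × ℝ) × ℝ → sphere (0 : E) 1,
        ContinuousOn g (tripod ×ˢ Icc (0 : ℝ) 1) ∧
        InjOn g ((tripod ×ˢ Icc (0 : ℝ) 1) ∩ g ⁻¹' (⋃ i, ball (c i) (r i))ᶜ) ∧
        ∃ s ∈ Ioo (0 : ℝ) 1, g ((0 : ℝ × ℝ), s) ∉ ⋃ i, closure (ball (c i) (r i)) := by
  rintro ⟨g, hg, hinj, s, hs, hgs⟩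
  have hsI := Ioo_subset_Icc_self hs
  rw [← tripodDisk_zero] at hgs
  refine hgs (mem_iUnion_closure_ball_of_branching hE hdisj hg hinj
    (lt_min hs.1 (sub_pos.2 hs.2)) (continuous_tripodDisk s).continuousOn
    (tripodDisk_injective s).injOn (mapsTo_tripodDisk hsI) (l := fun t ↦ (tripodRay t, s)) ?_
    (fun t ht ↦ ⟨tripodRay_mem_tripod ht, hsI⟩) ?_ ?_)
  · exact ((continuous_id.smul continuous_const).prodMk continuous_const).continuousOn
  · rw [tripodDisk_zero, tripodRay, zero_smul]
  · rintro t ht ⟨z, -, hz⟩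
    exact tripodLine_ne_tripodRay ht.1 (congrArg Prod.fst hz)

/-- **No branching at carpet points.**  Let `(Uᵢ)` be a countable family of nonempty open round
disks in `S²` with pairwise disjoint closures and dense union, and `I* = S² \ ⋃ᵢ Uᵢ`.  Then
there is no continuous map `g : T × [0,1] → S²` which is injective on `g⁻¹(I*)` and sends some
point `(o,s)`, `s ∈ (0,1)`, of the open spine outside `⋃ᵢ closure (Uᵢ)`. -/
theorem no_branching_at_carpet_points
    (U : ℕ → Set Sph) (c : ℕ → Sph) (r : ℕ → ℝ)
    (hr : ∀ i, 0 < r i) (hball : ∀ i, U i = Metric.ball (c i) (r i))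
    (hne : ∀ i, (U i).Nonempty)
    (hdisj : Pairwise fun i j => Disjoint (closure (U i)) (closure (U j)))
    (hdense : Dense (⋃ i, U i)) :
    ¬ ∃ g : (ℝ × ℝ) × ℝ → Sph,
        ContinuousOn g (tripod ×ˢ Icc (0 : ℝ) 1) ∧
        InjOn g ((tripod ×ˢ Icc (0 : ℝ) 1) ∩ g ⁻¹' (⋃ i, U i)ᶜ) ∧
        ∃ s ∈ Ioo (0 : ℝ) 1, g ((0 : ℝ × ℝ), s) ∉ ⋃ i, closure (U i) := by
  obtain rfl : U = fun i ↦ ball (c i) (r i) := funext hball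
  exact no_branching_at_carpet_points_general (by simp) hdisj
end
end
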